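/- The empirical measure process (L_n)_{n≥1} of the δ-ORRW on G satisfies the large deviation principle on 𝒫(V) with good rate function I_δ: I_δ is lower semicontinuous with compact level sets and finite at some point, for every closed set C⊆𝒫(V) one has limsup_n (1/n)·log P_{v₁}(L_n∈C) ≤ −inf_{ν∈C} I_δ(ν), and for every open set O⊆𝒫(V) one has liminf_n (1/n)·log P_{v₁}(L_n∈O) ≥ −inf_{ν∈O} I_δ(ν). -/

import Mathlib

open scoped BigOperators Classical ENNReal
open Filter Topology

noncomputable section
namespace ORRW

/-- Probability measures on a finite type `A`, topologized as a subset of `ℝ^A`. -/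
abbrev ProbMeas (A : Type) [Fintype A] : Type :=
  {p : A → ℝ // (∀ a, 0 ≤ p a) ∧ ∑ a, p a = 1}

/-- Relative entropy `R(γ‖ρ)` between two finitely supported "rows", valued in `EReal`,
with `+∞` when absolute continuity fails. -/
def relEnt {A : Type} [Fintype A] (γ ρ : A → ℝ) : EReal :=
  if ∀ a, ρ a = 0 → γ a = 0 then ((∑ a, γ a * Real.log (γ a / ρ a) : ℝ) : EReal)
  else (⊤ : EReal)

/-- `∫ R(q‖p) dν = Σ_a ν(a) · R(q(a,·)‖p(a,·))`. -/
def relEntInt {A : Type} [Fintype A] (ν : A → ℝ) (q p : A → A → ℝ) : EReal :=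
  ∑ a, (ν a : EReal) * relEnt (q a) (p a)

/-- `ν` is an invariant measure of the kernel `q`. -/
def Invariant {A : Type} [Fintype A] (ν : A → ℝ) (q : A → A → ℝ) : Prop :=
  ∀ y, ∑ x, ν x * q x y = ν y

/-- Extended-real logarithm: `⊥` at nonpositive arguments. -/
def elog (x : ℝ) : EReal := if x ≤ 0 then (⊥ : EReal) else ((Real.log x : ℝ) : EReal)

/-- Empirical measure of a finite trajectory `f : Fin (n+1) → A`. -/
def empMeas {A : Type} [Fintype A] [DecidableEq A] (n : ℕ) (f : Fin (n + 1) → A) :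
    ProbMeas A :=
  ⟨fun a => ((Finset.univ.filter (fun i => f i = a)).card : ℝ) / (n + 1),
    fun a => by positivity, by
      have key : ∑ a : A, ((Finset.univ.filter (fun i => f i = a)).card) = n + 1 := by
        have h := Finset.card_eq_sum_card_fiberwise
          (s := (Finset.univ : Finset (Fin (n + 1)))) (t := (Finset.univ : Finset A))
          (f := f) (fun i _ => Finset.mem_univ (f i))
        simpa using h.symm
      have key' : ∑ a : A, (((Finset.univ.filter (fun i => f i = a)).card : ℝ)) = (n : ℝ) + 1 := by
        have h2 := congrArg (fun m : ℕ => (m : ℝ)) key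
        push_cast at h2
        simpa using h2
      rw [← Finset.sum_div, key', div_self (by positivity)]⟩

section Graph

variable {V : Type} [Fintype V] [DecidableEq V]

/-- Weight of an edge given the set `F` of already traversed edges. -/
def gw (δ : ℝ) (F : Finset (Sym2 V)) (e : Sym2 V) : ℝ := if e ∈ F then δ else 1

/-- The transition kernel `p̂_F` on `V`. -/
def phat (G : SimpleGraph V) [DecidableRel G.Adj] (δ : ℝ) (F : Finset (Sym2 V))
    (x y : V) : ℝ :=
  if G.Adj x y then gw δ F s(x, y) / ∑ z ∈ G.neighborFinset x, gw δ F s(x, z) else 0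

/-- Two edges are adjacent iff they share a vertex. -/
def edgeAdj (e e' : Sym2 V) : Prop := ∃ v, v ∈ e ∧ v ∈ e'

/-- `x` is a vertex of the edge set `F`. -/
def memVerts (F : Finset (Sym2 V)) (x : V) : Prop := ∃ e ∈ F, x ∈ e

/-- `𝒯_G`: stochastic matrices on `V` adapted to `G`. -/
def TG (G : SimpleGraph V) : Set (V → V → ℝ) :=
  {q | (∀ x y, 0 ≤ q x y) ∧ (∀ x, ∑ y, q x y = 1) ∧ ∀ x y, q x y ≠ 0 → G.Adj x y}

/-- `𝒯(F)`: stochastic kernels from the vertex set of `F` to `V`, supported on `F`. -/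
def TE (F : Finset (Sym2 V)) : Set (V → V → ℝ) :=
  {q | (∀ x y, 0 ≤ q x y) ∧ (∀ x, memVerts F x → ∑ y, q x y = 1) ∧
    ∀ x y, q x y ≠ 0 → s(x, y) ∈ F}

/-- `ℰ`: admissible increasing sequences of traversed edge sets. -/
def seqE (G : SimpleGraph V) [DecidableRel G.Adj] (v₁ : V) :
    Set (Fin G.edgeFinset.card → Finset (Sym2 V)) :=
  {Es | (∀ k, Es k ⊆ G.edgeFinset) ∧ (∀ k, (Es k).card = (k : ℕ) + 1) ∧
    (∀ k l : Fin G.edgeFinset.card, (k : ℕ) + 1 = (l : ℕ) → Es k ⊂ Es l) ∧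
    (∀ k : Fin G.edgeFinset.card, (k : ℕ) = 0 → ∃ e ∈ Es k, v₁ ∈ e) ∧
    (∀ k l : Fin G.edgeFinset.card, (k : ℕ) + 1 = (l : ℕ) →
      ∀ e ∈ Es l \ Es k, ∃ e' ∈ Es k, edgeAdj e e')}

/-- The rate function `I_δ`. -/
def Ifun (G : SimpleGraph V) [DecidableRel G.Adj] (v₁ : V) (δ : ℝ) (ν : ProbMeas V) : EReal :=
  sInf { c : EReal |
    ∃ (νs : Fin G.edgeFinset.card → ProbMeas V) (r : Fin G.edgeFinset.card → ℝ)
      (Es : Fin G.edgeFinset.card → Finset (Sym2 V))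
      (qs : Fin G.edgeFinset.card → V → V → ℝ),
      Es ∈ seqE G v₁ ∧ (∀ k, 0 ≤ r k) ∧ (∑ k, r k = 1) ∧
      (∀ k x, (νs k).1 x ≠ 0 → memVerts (Es k) x) ∧
      (∀ x, ∑ k, r k * (νs k).1 x = ν.1 x) ∧
      (∀ k, qs k ∈ TE (Es k)) ∧ (∀ k, Invariant (νs k).1 (qs k)) ∧
      c = ∑ k, ((r k : ℝ) : EReal) * relEntInt (νs k).1 (qs k) (phat G δ (Es k)) }

/-- Edges traversed along a path, given as a list of consecutively visited vertices. -/
def pathEdges : List V → Finset (Sym2 V)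
  | [] => ∅
  | [_] => ∅
  | x :: y :: t => insert s(x, y) (pathEdges (y :: t))

/-- Product of one-step ORRW transition probabilities along a trajectory,
the trajectory being listed in reverse chronological order. -/
def stepsProb (G : SimpleGraph V) [DecidableRel G.Adj] (δ : ℝ) : List V → ℝ
  | [] => 1
  | [_] => 1
  | y :: x :: t => phat G δ (pathEdges (x :: t).reverse) x y * stepsProb G δ (x :: t)

/-- The law of `(X_0, …, X_n)` for the `δ`-ORRW started at `v₁`. -/
def trajProb (G : SimpleGraph V) [DecidableRel G.Adj] (δ : ℝ) (v₁ : V) (n : ℕ)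
    (f : Fin (n + 1) → V) : ℝ :=
  if f 0 = v₁ then stepsProb G δ (List.ofFn f).reverse else 0

/-- `P_{v₁}(L_{n+1} ∈ C)`: the probability that the empirical measure of the first
`n+1` positions of the `δ`-ORRW lies in `C`. -/
def probEmp (G : SimpleGraph V) [DecidableRel G.Adj] (δ : ℝ) (v₁ : V) (n : ℕ)
    (C : Set (ProbMeas V)) : ℝ :=
  ∑ f : Fin (n + 1) → V, if empMeas n f ∈ C then trajProb G δ v₁ n f else 0

/-- The family `𝒮` of edge sets of connected subgraphs having an edge at `v₁`. -/
def scrS (G : SimpleGraph V) [DecidableRel G.Adj] (v₁ : V) : Set (Finset (Sym2 V)) :=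
  {F | F ⊆ G.edgeFinset ∧ (∃ e ∈ F, v₁ ∈ e) ∧
    ∀ x y : V, memVerts F x → memVerts F y →
      (SimpleGraph.fromEdgeSet (↑F : Set (Sym2 V))).Reachable x y}

/-- `𝒮₀` is a decreasing subset of `𝒮`. -/
def DecreasingIn (G : SimpleGraph V) [DecidableRel G.Adj] (v₁ : V)
    (S0 : Set (Finset (Sym2 V))) : Prop :=
  ∀ F₁ F₂, F₁ ∈ scrS G v₁ → F₂ ∈ scrS G v₁ → F₁ ⊆ F₂ → F₂ ∈ S0 → F₁ ∈ S0

/-- `P_{v₁}(T_{𝒮₀} > n)`. -/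
def probTgt (G : SimpleGraph V) [DecidableRel G.Adj] (δ : ℝ) (v₁ : V)
    (S0 : Set (Finset (Sym2 V))) (n : ℕ) : ℝ :=
  ∑ f : Fin (n + 1) → V,
    if ∀ k, 1 ≤ k → k ≤ n → pathEdges ((List.ofFn f).take (k + 1)) ∈ S0 then
      trajProb G δ v₁ n f
    else 0

/-- `P_{v₁}(C_E > n)` for the edge cover time `C_E`. -/
def probCgt (G : SimpleGraph V) [DecidableRel G.Adj] (δ : ℝ) (v₁ : V) (n : ℕ) : ℝ :=
  ∑ f : Fin (n + 1) → V,
    if ¬ G.edgeFinset ⊆ pathEdges (List.ofFn f) then trajProb G δ v₁ n f else 0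

/-- `E_{v₁}[exp (α T_{𝒮₀})]`, valued in `ℝ≥0∞`; the stopping time takes values in
`{1, 2, …} ∪ {∞}`. -/
def expT (G : SimpleGraph V) [DecidableRel G.Adj] (δ : ℝ) (v₁ : V)
    (S0 : Set (Finset (Sym2 V))) (α : ℝ) : ℝ≥0∞ :=
  (∑' n : ℕ, ENNReal.ofReal
      (Real.exp (α * (n + 1)) * (probTgt G δ v₁ S0 n - probTgt G δ v₁ S0 (n + 1)))) +
    (if 0 < α then (⊤ : ℝ≥0∞) else if α = 0 then 1 else 0) *
      ENNReal.ofReal (⨅ n : ℕ, probTgt G δ v₁ S0 n)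

/-- `E_{v₁}[exp (α C_E)]`, valued in `ℝ≥0∞`. -/
def expC (G : SimpleGraph V) [DecidableRel G.Adj] (δ : ℝ) (v₁ : V) (α : ℝ) : ℝ≥0∞ :=
  (∑' n : ℕ, ENNReal.ofReal
      (Real.exp (α * (n + 1)) * (probCgt G δ v₁ n - probCgt G δ v₁ (n + 1)))) +
    (if 0 < α then (⊤ : ℝ≥0∞) else if α = 0 then 1 else 0) *
      ENNReal.ofReal (⨅ n : ℕ, probCgt G δ v₁ n)

/-- The critical exponent `α_c(δ)` attached to a family `𝒮₀` of edge sets. -/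
def alphaC (G : SimpleGraph V) [DecidableRel G.Adj] (δ : ℝ)
    (S0 : Set (Finset (Sym2 V))) : EReal :=
  sInf { c : EReal | ∃ (ν : ProbMeas V) (F : Finset (Sym2 V)) (q : V → V → ℝ),
    F ∈ S0 ∧ q ∈ TE F ∧ (∀ x, ν.1 x ≠ 0 → memVerts F x) ∧ Invariant ν.1 q ∧
    c = relEntInt ν.1 q (phat G δ F) }

/-- `α_c^1(δ)`: the critical exponent for the cover time. -/
def alphaC1 (G : SimpleGraph V) [DecidableRel G.Adj] (v₁ : V) (δ : ℝ) : EReal :=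
  alphaC G δ (scrS G v₁ \ {G.edgeFinset})

end Graph

section Lifted

variable {V : Type} [Fintype V] [LinearOrder V]

/-- Smaller endpoint of an unordered pair. -/
def sym2lo (e : Sym2 V) : V := Sym2.lift ⟨fun a b => min a b, fun a b => min_comm a b⟩ e

/-- Larger endpoint of an unordered pair. -/
def sym2hi (e : Sym2 V) : V := Sym2.lift ⟨fun a b => max a b, fun a b => max_comm a b⟩ e

/-- `V_S = E × {-1, 1}`: vertex set of the lifted directed graph `S`
(`true` plays the role of `+1`). -/
abbrev VSet (G : SimpleGraph V) [DecidableRel G.Adj] : Type :=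
  {e : Sym2 V // e ∈ G.edgeFinset} × Bool

/-- Tail `z⁻` of an oriented edge. -/
def zm (G : SimpleGraph V) [DecidableRel G.Adj] (z : VSet G) : V :=
  if z.2 then sym2lo z.1.1 else sym2hi z.1.1

/-- Head `z⁺` of an oriented edge. -/
def zp (G : SimpleGraph V) [DecidableRel G.Adj] (z : VSet G) : V :=
  if z.2 then sym2hi z.1.1 else sym2lo z.1.1

/-- The kernel `p_F` on the lifted directed graph `S`. -/
def pS (G : SimpleGraph V) [DecidableRel G.Adj] (δ : ℝ) (F : Finset (Sym2 V))
    (z₁ z₂ : VSet G) : ℝ :=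
  if zp G z₁ = zm G z₂ then
    gw δ F z₂.1.1 / ∑ w : VSet G, (if zp G z₁ = zm G w then gw δ F w.1.1 else 0)
  else 0

/-- `𝒯_S`: stochastic matrices on `V_S` moving along orientations. -/
def TS (G : SimpleGraph V) [DecidableRel G.Adj] : Set (VSet G → VSet G → ℝ) :=
  {q | (∀ z w, 0 ≤ q z w) ∧ (∀ z, ∑ w, q z w = 1) ∧ ∀ z w, q z w ≠ 0 → zp G z = zm G w}

/-- `𝒞(𝒮₀)`: probability measures on `V_S` whose first marginal is supported in
some member of `𝒮₀`. -/
def CC (G : SimpleGraph V) [DecidableRel G.Adj] (S0 : Set (Finset (Sym2 V))) :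
    Set (ProbMeas (VSet G)) :=
  {μ | ∃ F ∈ S0, ∀ z : VSet G, μ.1 z ≠ 0 → z.1.1 ∈ F}

/-- `Λ_{δ,𝒮₀}`. -/
def Lam (G : SimpleGraph V) [DecidableRel G.Adj] (v₁ : V) (δ : ℝ)
    (S0 : Set (Finset (Sym2 V))) (μ : ProbMeas (VSet G)) : EReal :=
  sInf { c : EReal |
    ∃ (μs : Fin G.edgeFinset.card → ProbMeas (VSet G)) (r : Fin G.edgeFinset.card → ℝ)
      (Es : Fin G.edgeFinset.card → Finset (Sym2 V))
      (qs : Fin G.edgeFinset.card → VSet G → VSet G → ℝ),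
      Es ∈ seqE G v₁ ∧ (∀ k, 0 ≤ r k) ∧ (∀ k, Es k ∉ S0 → r k = 0) ∧ (∑ k, r k = 1) ∧
      (∀ k z, (μs k).1 z ≠ 0 → z.1.1 ∈ Es k) ∧
      (∀ z, ∑ k, r k * (μs k).1 z = μ.1 z) ∧
      (∀ k, qs k ∈ TS G) ∧ (∀ k, Invariant (μs k).1 (qs k)) ∧
      c = ∑ k, ((r k : ℝ) : EReal) * relEntInt (μs k).1 (qs k) (pS G δ (Es k)) }

/-- `Λ^z_{δ,𝒮₀}`. -/
def LamZ (G : SimpleGraph V) [DecidableRel G.Adj] (v₁ : V) (δ : ℝ)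
    (S0 : Set (Finset (Sym2 V))) (z : VSet G) (μ : ProbMeas (VSet G)) : EReal :=
  sInf { c : EReal |
    ∃ (μs : Fin G.edgeFinset.card → ProbMeas (VSet G)) (r : Fin G.edgeFinset.card → ℝ)
      (Es : Fin G.edgeFinset.card → Finset (Sym2 V))
      (qs : Fin G.edgeFinset.card → VSet G → VSet G → ℝ),
      Es ∈ seqE G v₁ ∧ (∀ k : Fin G.edgeFinset.card, (k : ℕ) = 0 → Es k = {z.1.1}) ∧
      (∀ k, 0 ≤ r k) ∧ (∀ k, Es k ∉ S0 → r k = 0) ∧ (∑ k, r k = 1) ∧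
      (∀ k w, (μs k).1 w ≠ 0 → w.1.1 ∈ Es k) ∧
      (∀ w, ∑ k, r k * (μs k).1 w = μ.1 w) ∧
      (∀ k, qs k ∈ TS G) ∧ (∀ k, Invariant (μs k).1 (qs k)) ∧
      c = ∑ k, ((r k : ℝ) : EReal) * relEntInt (μs k).1 (qs k) (pS G δ (Es k)) }

/-- `Λ₁`: the Donsker–Varadhan functional for the simple random walk on `S`
(whose kernel is `pS` with `δ = 1`). -/
def Lam1 (G : SimpleGraph V) [DecidableRel G.Adj] (μ : ProbMeas (VSet G)) : EReal :=
  sInf { c : EReal | ∃ q ∈ TS G, Invariant μ.1 q ∧ c = relEntInt μ.1 q (pS G 1 ∅) }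

/-- Boundary `∂F` of an edge set: edges of `F` adjacent to some edge outside `F`. -/
def bdry (G : SimpleGraph V) [DecidableRel G.Adj] (F : Finset (Sym2 V)) : Finset (Sym2 V) :=
  F.filter fun e => ∃ e' ∈ G.edgeFinset \ F, edgeAdj e e'

/-- Out-degree `d(z)` of `z` in `S`. -/
def outDeg (G : SimpleGraph V) [DecidableRel G.Adj] (z : VSet G) : ℕ :=
  (Finset.univ.filter (fun w : VSet G => zp G z = zm G w)).card

/-- Number `k(z)` of out-neighbours of `z` lying in `F × {-1, 1}`. -/
def outDegIn (G : SimpleGraph V) [DecidableRel G.Adj] (F : Finset (Sym2 V))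
    (z : VSet G) : ℕ :=
  (Finset.univ.filter (fun w : VSet G => zp G z = zm G w ∧ w.1.1 ∈ F)).card

/-- The law of `(Z_0, …, Z_n)` for the lifted `δ`-ORRW conditioned on `Z_0 = z`. -/
def liftTraj (G : SimpleGraph V) [DecidableRel G.Adj] (δ : ℝ) (z : VSet G) (n : ℕ)
    (g : Fin (n + 1) → VSet G) : ℝ :=
  if g 0 = z then
    ∏ i : Fin n,
      pS G δ ((Finset.Iic i.castSucc).image (fun j => (g j).1.1))
        (g i.castSucc) (g i.succ)
  else 0

/-- The restricted logarithmic Laplace functional `W^{n+1}_{𝒮₀}(z)`. -/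
def Wres (G : SimpleGraph V) [DecidableRel G.Adj] (δ : ℝ) (z : VSet G)
    (S0 : Set (Finset (Sym2 V))) (h : ProbMeas (VSet G) → ℝ) (n : ℕ) : EReal :=
  if 0 < ∑ g : Fin (n + 1) → VSet G,
      (if empMeas n g ∈ CC G S0 then liftTraj G δ z n g else 0) then
    ((-((((n : ℝ) + 1))⁻¹ * Real.log (∑ g : Fin (n + 1) → VSet G,
      if empMeas n g ∈ CC G S0 then
        Real.exp (-((n : ℝ) + 1) * h (empMeas n g)) * liftTraj G δ z n g
      else 0)) : ℝ) : EReal)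
  else (⊤ : EReal)

end Lifted

/-!
Grouping the steps of a trajectory by the set of edges traversed beforehand turns it into a family
of integer matrices `M k`, one for each edge set `E_k` of a sequence in `ℰ`; each `M k` is a
circulation up to a bounded defect. The probability of the trajectory depends on this family only,
and `I_δ(ν)` is the minimum of a continuous relative-entropy cost over a compact set of families of
circulations with vertex marginal `ν`.

Upper bound (method of types): there are polynomially many families, and the trajectories with a
given family have total probability at most the exponential of minus its cost, so compactness
and continuity suffice.

Lower bound: families charging every edge of `E_k` in both directions are dense. For such a family
`m = M k`, follow the irreducible chain with kernel `m(x,y) / ∑ z, m(x,z)` on the edges `E_k` during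
a time proportional to the mass of `m`. The occupation times and the log-likelihood concentrate
by a second moment bound on the martingale obtained from the Poisson equation, and passing
from `E_k` to `E_{k+1}` takes boundedly many steps, each of probability bounded below.
-/

/-! ### Path expectations -/

section PathExpectation

variable {A : Type*}

/-- The probability that a process with transition kernel `K`, which may depend on the whole past,
continues the history `l` by `u`. Histories are listed in reverse chronological order. -/
def pathWeight (K : List A → A → ℝ) (l : List A) : List A → ℝ
  | [] => 1
  | y :: u => K (u ++ l) y * pathWeight K l u

theorem pathWeight_append (K : List A → A → ℝ) (l u w : List A) :
    pathWeight K l (w ++ u) = pathWeight K (u ++ l) w * pathWeight K l u := by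
  induction w with
  | nil => simp [pathWeight]
  | cons y w ih => simp only [List.cons_append, pathWeight, ih, List.append_assoc, mul_assoc]

theorem pathWeight_nonneg {K : List A → A → ℝ} (hK : ∀ l y, 0 ≤ K l y) (l u : List A) :
    0 ≤ pathWeight K l u := by
  induction u with
  | nil => exact zero_le_one
  | cons y u ih => exact mul_nonneg (hK _ _) ih

variable [Fintype A]

/-- The expectation of `φ` of the history after `n` further steps of a process with transition
kernel `K`, started from the history `l`. -/
def pathExp (K : List A → A → ℝ) : ℕ → (List A → ℝ) → List A → ℝ
  | 0, φ, l => φ l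
  | n + 1, φ, l => ∑ y, K l y * pathExp K n φ (y :: l)

/-- The probability that the history lies in `S` after `n` further steps from the history `l`. -/
def pathProb (K : List A → A → ℝ) (n : ℕ) (S : Set (List A)) (l : List A) : ℝ :=
  pathExp K n (S.indicator 1) l

theorem pathExp_eq_sum (K : List A → A → ℝ) (n : ℕ) (φ : List A → ℝ) (l : List A) :
    pathExp K n φ l = ∑ u : Fin n → A,
      pathWeight K l (List.ofFn u).reverse * φ ((List.ofFn u).reverse ++ l) := by
  induction n generalizing l with
  | zero => simp [pathExp, pathWeight]
  | succ n ih =>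
    rw [← Equiv.sum_comp (Fin.consEquiv fun _ : Fin (n + 1) => A), Fintype.sum_prod_type]
    refine Finset.sum_congr rfl fun y _ => ?_
    rw [ih, Finset.mul_sum]
    refine Finset.sum_congr rfl fun u _ => ?_
    have hrev : (List.ofFn (Fin.consEquiv (fun _ : Fin (n + 1) => A) (y, u))).reverse =
        (List.ofFn u).reverse ++ [y] := by
      simp [Fin.consEquiv]
    rw [hrev, pathWeight_append, List.append_assoc, List.singleton_append]
    simp only [pathWeight, List.nil_append, mul_one]
    ring

theorem pathExp_add_steps (K : List A → A → ℝ) (m n : ℕ) (φ : List A → ℝ) (l : List A) :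
    pathExp K (m + n) φ l = pathExp K m (pathExp K n φ) l := by
  induction m generalizing l with
  | zero => simp [pathExp]
  | succ m ih =>
    rw [Nat.add_right_comm]
    simp only [pathExp, ih]

theorem pathExp_add (K : List A → A → ℝ) (n : ℕ) (φ ψ : List A → ℝ) (l : List A) :
    pathExp K n (fun l' => φ l' + ψ l') l = pathExp K n φ l + pathExp K n ψ l := by
  simp only [pathExp_eq_sum, mul_add, Finset.sum_add_distrib]

theorem pathExp_const_mul (K : List A → A → ℝ) (n : ℕ) (c : ℝ) (φ : List A → ℝ) (l : List A) :
    pathExp K n (fun l' => c * φ l') l = c * pathExp K n φ l := by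
  simp only [pathExp_eq_sum, Finset.mul_sum, mul_left_comm]

theorem pathExp_sum {ι : Type*} (s : Finset ι) (K : List A → A → ℝ) (n : ℕ)
    (φ : ι → List A → ℝ) (l : List A) :
    pathExp K n (fun l' => ∑ i ∈ s, φ i l') l = ∑ i ∈ s, pathExp K n (φ i) l := by
  simp only [pathExp_eq_sum, Finset.mul_sum]
  exact Finset.sum_comm

section Nonneg

variable {K : List A → A → ℝ}

theorem pathExp_mono (hK : ∀ l y, 0 ≤ K l y) {n : ℕ} {φ ψ : List A → ℝ} {l : List A}
    (h : ∀ u : List A, u.length = n → φ (u ++ l) ≤ ψ (u ++ l)) :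
    pathExp K n φ l ≤ pathExp K n ψ l := by
  simp only [pathExp_eq_sum]
  exact Finset.sum_le_sum fun u _ =>
    mul_le_mul_of_nonneg_left (h _ (by simp)) (pathWeight_nonneg hK _ _)

theorem pathExp_nonneg (hK : ∀ l y, 0 ≤ K l y) {φ : List A → ℝ} (hφ : ∀ l, 0 ≤ φ l) (n : ℕ)
    (l : List A) : 0 ≤ pathExp K n φ l := by
  rw [pathExp_eq_sum]
  exact Finset.sum_nonneg fun u _ => mul_nonneg (pathWeight_nonneg hK _ _) (hφ _)

theorem pathProb_nonneg (hK : ∀ l y, 0 ≤ K l y) (n : ℕ) (S : Set (List A)) (l : List A) :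
    0 ≤ pathProb K n S l :=
  pathExp_nonneg hK (fun _ => Set.indicator_nonneg (fun _ _ => zero_le_one) _) n l

theorem pathProb_mono (hK : ∀ l y, 0 ≤ K l y) {n : ℕ} {S T : Set (List A)} {l : List A}
    (h : ∀ u : List A, u.length = n → u ++ l ∈ S → u ++ l ∈ T) :
    pathProb K n S l ≤ pathProb K n T l :=
  pathExp_mono hK fun u hu => by
    by_cases hS : u ++ l ∈ S
    · rw [Set.indicator_of_mem hS, Set.indicator_of_mem (h u hu hS)]
    · rw [Set.indicator_of_notMem hS]
      exact Set.indicator_nonneg (fun _ _ => zero_le_one) _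

theorem mul_pathProb_le_pathExp (hK : ∀ l y, 0 ≤ K l y) {c : ℝ} {n : ℕ} {S : Set (List A)}
    {φ : List A → ℝ} (hφ : ∀ l, 0 ≤ φ l) {l : List A}
    (h : ∀ u : List A, u.length = n → u ++ l ∈ S → c ≤ φ (u ++ l)) :
    c * pathProb K n S l ≤ pathExp K n φ l := by
  rw [pathProb, ← pathExp_const_mul]
  refine pathExp_mono hK fun u hu => ?_
  by_cases hS : u ++ l ∈ S
  · simpa [hS] using h u hu hS
  · simpa [hS] using hφ _

theorem pathExp_one_le_pathProb_iInter_add (hK : ∀ l y, 0 ≤ K l y) {ι : Type*} [Fintype ι]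
    (S : ι → Set (List A)) (n : ℕ) (l : List A) :
    pathExp K n (fun _ => 1) l ≤
      pathProb K n (⋂ i, S i) l + ∑ i, pathProb K n (S i)ᶜ l := by
  simp only [pathProb]
  rw [← pathExp_sum, ← pathExp_add]
  refine pathExp_mono hK fun u _ => ?_
  have hnonneg : ∀ i, 0 ≤ (S i)ᶜ.indicator (1 : List A → ℝ) (u ++ l) := fun i =>
    Set.indicator_nonneg (fun _ _ => zero_le_one) _
  by_cases hu : u ++ l ∈ ⋂ i, S i
  · rw [Set.indicator_of_mem hu]
    exact le_add_of_nonneg_right (Finset.sum_nonneg fun i _ => hnonneg i)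
  · obtain ⟨i, hi⟩ := not_forall.1 (mt Set.mem_iInter.2 hu)
    rw [Set.indicator_of_notMem hu, zero_add]
    refine le_trans ?_ (Finset.single_le_sum (fun j _ => hnonneg j) (Finset.mem_univ i))
    rw [Set.indicator_of_mem (Set.mem_compl hi), Pi.one_apply]

theorem pathExp_one_le_one (hK : ∀ l y, 0 ≤ K l y) (hK₁ : ∀ l, ∑ y, K l y ≤ 1) (n : ℕ)
    (l : List A) : pathExp K n (fun _ => 1) l ≤ 1 := by
  induction n generalizing l with
  | zero => exact le_rfl
  | succ n ih =>
    calc ∑ y, K l y * pathExp K n (fun _ => 1) (y :: l)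
        ≤ ∑ y, K l y * 1 :=
          Finset.sum_le_sum fun y _ => mul_le_mul_of_nonneg_left (ih _) (hK _ _)
      _ ≤ 1 := by simpa only [mul_one] using hK₁ l

end Nonneg

end PathExpectation

/-! ### The law of the walk -/

section Walk

variable {V : Type} [DecidableEq V]

/-- The transition kernel on histories of a walk that uses the kernel `q F` while `F` is the set of
traversed edges. At the empty history, which never occurs, it is set to `0`. -/
def stepKernel (q : Finset (Sym2 V) → V → V → ℝ) : List V → V → ℝ
  | [], _ => 0
  | x :: t, y => q (pathEdges (x :: t)) x y

theorem stepKernel_nonneg {q : Finset (Sym2 V) → V → V → ℝ} (hq : ∀ F x y, 0 ≤ q F x y)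
    (l : List V) (y : V) : 0 ≤ stepKernel q l y := by
  cases l with
  | nil => exact le_rfl
  | cons x t => exact hq _ _ _

theorem sum_stepKernel_le_one [Fintype V] {q : Finset (Sym2 V) → V → V → ℝ}
    (hq : ∀ F x, ∑ y, q F x y ≤ 1) (l : List V) : ∑ y, stepKernel q l y ≤ 1 := by
  cases l with
  | nil => simp [stepKernel]
  | cons x t => exact hq _ _

theorem pathEdges_concat (l : List V) (x y : V) :
    pathEdges (l ++ [x, y]) = insert s(x, y) (pathEdges (l ++ [x])) := by
  induction l with
  | nil => rfl
  | cons a l ih =>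
    cases l with
    | nil => simpa [pathEdges] using Finset.pair_comm _ _
    | cons c l =>
      simp only [List.cons_append, pathEdges] at ih ⊢
      rw [ih, Finset.insert_comm]

theorem pathEdges_reverse (l : List V) : pathEdges l.reverse = pathEdges l := by
  induction l with
  | nil => rfl
  | cons y l ih =>
    cases l with
    | nil => rfl
    | cons x t =>
      have hrev : (y :: x :: t).reverse = t.reverse ++ [x, y] := by simp
      rw [hrev, pathEdges_concat, ← List.reverse_cons, ih, Sym2.eq_swap]
      rfl

/-- The proportion of time a nonempty history spends at `a`. -/
def empFreq (l : List V) (a : V) : ℝ := l.count a / l.length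

theorem count_ofFn {n : ℕ} (f : Fin n → V) (a : V) :
    (List.ofFn f).count a = (Finset.univ.filter fun i => f i = a).card := by
  induction n with
  | zero => simp
  | succ n ih =>
    rw [Fin.card_filter_univ_succ, List.ofFn_succ, List.count_cons, ih, add_comm]
    simp only [beq_iff_eq]
    split_ifs <;> simp [add_comm]

theorem gw_pos {δ : ℝ} (hδ : 0 < δ) (F : Finset (Sym2 V)) (e : Sym2 V) : 0 < gw δ F e := by
  unfold gw
  split_ifs
  exacts [hδ, one_pos]

variable [Fintype V]

theorem empMeas_eq_empFreq {n : ℕ} (f : Fin (n + 1) → V) :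
    (empMeas n f).1 = empFreq (List.ofFn f).reverse := by
  funext a
  rw [empFreq, List.count_reverse, count_ofFn, List.length_reverse, List.length_ofFn, Nat.cast_succ]
  rfl

variable (G : SimpleGraph V) [DecidableRel G.Adj]

theorem stepsProb_append_singleton (δ : ℝ) (u : List V) (v : V) :
    stepsProb G δ (u ++ [v]) = pathWeight (stepKernel (phat G δ)) [v] u := by
  induction u with
  | nil => rfl
  | cons y u ih =>
    rw [pathWeight, ← ih]
    cases u with
    | nil => simp [stepsProb, stepKernel, pathEdges]
    | cons x t => simp [stepsProb, stepKernel, ← pathEdges_reverse (x :: (t ++ [v]))]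

theorem probEmp_eq_pathProb (δ : ℝ) (v₁ : V) (n : ℕ) (C : Set (ProbMeas V)) :
    probEmp G δ v₁ n C =
      pathProb (stepKernel (phat G δ)) n {l | empFreq l ∈ Subtype.val '' C} [v₁] := by
  rw [pathProb, pathExp_eq_sum, probEmp,
    ← Equiv.sum_comp (Fin.consEquiv fun _ : Fin (n + 1) => V), Fintype.sum_prod_type,
    Finset.sum_eq_single v₁ _ (by simp)]
  · refine Finset.sum_congr rfl fun u _ => ?_
    change (if empMeas n (Fin.cons v₁ u) ∈ C then trajProb G δ v₁ n (Fin.cons v₁ u) else 0) = _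
    have hrev : (List.ofFn (Fin.cons v₁ u : Fin (n + 1) → V)).reverse =
        (List.ofFn u).reverse ++ [v₁] := by
      simp
    have hmem : empMeas n (Fin.cons v₁ u) ∈ C ↔
        (List.ofFn u).reverse ++ [v₁] ∈ {l | empFreq l ∈ Subtype.val '' C} := by
      rw [Set.mem_ofPred_eq, ← hrev, ← empMeas_eq_empFreq, Subtype.val_injective.mem_set_image]
    rw [trajProb, hrev, stepsProb_append_singleton, Set.indicator_apply, ← if_congr hmem rfl rfl,
      if_pos (Fin.cons_zero _ _), mul_ite, mul_zero, Pi.one_apply, mul_one]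
  · intro y _ hy
    simp [trajProb, Fin.consEquiv, hy]

variable {G}

theorem adj_of_phat_ne_zero {δ : ℝ} {F : Finset (Sym2 V)} {x y : V} (h : phat G δ F x y ≠ 0) :
    G.Adj x y :=
  of_not_not fun hxy => h (if_neg hxy)

theorem phat_pos {δ : ℝ} (hδ : 0 < δ) (F : Finset (Sym2 V)) {x y : V} (h : G.Adj x y) :
    0 < phat G δ F x y := by
  rw [phat, if_pos h]
  exact div_pos (gw_pos hδ _ _)
    (Finset.sum_pos (fun z _ => gw_pos hδ _ _) ⟨y, (G.mem_neighborFinset x y).2 h⟩)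

theorem phat_nonneg {δ : ℝ} (hδ : 0 < δ) (F : Finset (Sym2 V)) (x y : V) :
    0 ≤ phat G δ F x y := by
  by_cases h : G.Adj x y
  · exact (phat_pos hδ F h).le
  · exact (if_neg h).ge

end Walk

/-! ### Step counts of trajectories -/

section Flow

variable {V : Type*} [Fintype V]

/-- The mass that `m` sends out of `x`. -/
def outflow (m : V → V → ℝ) (x : V) : ℝ := ∑ y, m x y

/-- The mass that `m` sends out of `x` minus the mass it sends into `x`. -/
def netFlow (m : V → V → ℝ) (x : V) : ℝ := outflow m x - ∑ y, m y x

/-- The total mass of `m`. -/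
def mass (m : V → V → ℝ) : ℝ := ∑ x, outflow m x

end Flow

section Trajectory

variable {V : Type}

/-- Trajectories of `G` started at `v₁`, in reverse chronological order. -/
inductive IsTrajectory (G : SimpleGraph V) (v₁ : V) : List V → Prop
  | start : IsTrajectory G v₁ [v₁]
  | step {x y : V} {t : List V} (hxy : G.Adj x y) (ht : IsTrajectory G v₁ (x :: t)) :
      IsTrajectory G v₁ (y :: x :: t)

variable [DecidableEq V]

/-- The number of steps from `x` to `y` taken while the set of traversed edges is `F`. -/
def stepCount : List V → Finset (Sym2 V) → V → V → ℕ
  | y :: x :: t, F, a, b =>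
    stepCount (x :: t) F a b + if pathEdges (x :: t) = F ∧ x = a ∧ y = b then 1 else 0
  | _, _, _, _ => 0

variable {G : SimpleGraph V} {v₁ : V} {l : List V} {F : Finset (Sym2 V)} {x y : V}

theorem isTrajectory_of_pathWeight_ne_zero [Fintype V] [DecidableRel G.Adj] {δ : ℝ} {u : List V}
    (h : pathWeight (stepKernel (phat G δ)) [v₁] u ≠ 0) : IsTrajectory G v₁ (u ++ [v₁]) := by
  induction u with
  | nil => exact .start
  | cons y u ih =>
    have hu : IsTrajectory G v₁ (u ++ [v₁]) := ih (right_ne_zero_of_mul h)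
    have hy : stepKernel (phat G δ) (u ++ [v₁]) y ≠ 0 := left_ne_zero_of_mul h
    rw [List.cons_append]
    cases hl : u ++ [v₁] with
    | nil => simp at hl
    | cons x t =>
      rw [hl] at hu hy
      exact .step (adj_of_phat_ne_zero hy) hu

theorem IsTrajectory.eq_start_or_mem_pathEdges {t : List V} (h : IsTrajectory G v₁ (x :: t)) :
    x = v₁ ∨ ∃ e ∈ pathEdges (x :: t), x ∈ e := by
  cases h with
  | start => exact .inl rfl
  | step hxy ht => exact .inr ⟨_, Finset.mem_insert_self _ _, Sym2.mem_mk_left _ _⟩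

theorem stepCount_cons_cons_ne_zero {a b : V} {t : List V}
    (h : stepCount (b :: a :: t) F x y ≠ 0) :
    stepCount (a :: t) F x y ≠ 0 ∨ pathEdges (a :: t) = F ∧ a = x ∧ b = y := by
  by_contra! hno
  refine h ?_
  rw [stepCount, hno.1, if_neg fun hst => hno.2 hst.1 hst.2.1 hst.2.2]

theorem IsTrajectory.mem_pathEdges_of_stepCount_ne_zero (h : IsTrajectory G v₁ l)
    (hc : stepCount l F x y ≠ 0) : F ⊆ pathEdges l ∧ s(x, y) ∈ pathEdges l := by
  induction h with
  | start => exact absurd rfl hc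
  | step _ _ ih =>
    rcases stepCount_cons_cons_ne_zero hc with hc' | ⟨rfl, rfl, rfl⟩
    · exact ⟨(ih hc').1.trans (Finset.subset_insert _ _), Finset.mem_insert_of_mem (ih hc').2⟩
    · rw [Sym2.eq_swap]
      exact ⟨Finset.subset_insert _ _, Finset.mem_insert_self _ _⟩

theorem IsTrajectory.adj_of_stepCount_ne_zero (h : IsTrajectory G v₁ l)
    (hc : stepCount l F x y ≠ 0) : G.Adj x y := by
  induction h with
  | start => exact absurd rfl hc
  | step hxy _ ih =>
    rcases stepCount_cons_cons_ne_zero hc with hc' | ⟨-, rfl, rfl⟩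
    exacts [ih hc', hxy]

theorem IsTrajectory.stepCount_le_one_of_notMem (h : IsTrajectory G v₁ l) (hF : s(x, y) ∉ F) :
    stepCount l F x y ≤ 1 := by
  induction h with
  | start => exact zero_le_one
  | @step a b t _ ht ih =>
    rw [stepCount]
    split_ifs with hstep
    · obtain ⟨rfl, -, -⟩ := hstep
      have hzero : stepCount (a :: t) (pathEdges (a :: t)) x y = 0 :=
        of_not_not fun hc => hF (ht.mem_pathEdges_of_stepCount_ne_zero hc).2
      rw [hzero]
    · exact ih

variable [Fintype V]

theorem pathWeight_eq_prod (q : Finset (Sym2 V) → V → V → ℝ) (v : V) (u : List V) :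
    pathWeight (stepKernel q) [v] u =
      ∏ F, ∏ x, ∏ y, q F x y ^ stepCount (u ++ [v]) F x y := by
  induction u with
  | nil => simp [pathWeight, stepCount]
  | cons b u ih =>
    rw [pathWeight, ih, List.cons_append]
    cases hl : u ++ [v] with
    | nil => simp at hl
    | cons a t =>
      simp only [stepCount, pow_add, Finset.prod_mul_distrib, stepKernel]
      rw [mul_comm]
      congr 1
      simp [pow_ite, ite_and]

theorem sum_stepCount (l : List V) : ∑ F, ∑ x, ∑ y, stepCount l F x y = l.length - 1 := by
  induction l with
  | nil => simp [stepCount]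
  | cons y l ih =>
    cases l with
    | nil => simp [stepCount]
    | cons x t =>
      simp only [stepCount, Finset.sum_add_distrib, ih]
      simp [ite_and]

theorem IsTrajectory.count_eq (h : IsTrajectory G v₁ l) (a : V) :
    l.count a = (∑ F, ∑ x, stepCount l F x a) + if v₁ = a then 1 else 0 := by
  induction h with
  | start => simp [stepCount, List.count_singleton]
  | step _ _ ih =>
    rw [List.count_cons, ih]
    simp only [stepCount, Finset.sum_add_distrib]
    simp [ite_and, add_right_comm]

theorem netFlow_stepCount_cons_cons (y x : V) (t : List V) (F : Finset (Sym2 V)) :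
    netFlow (fun a b => (stepCount (y :: x :: t) F a b : ℝ)) =
      netFlow (fun a b => (stepCount (x :: t) F a b : ℝ)) +
        if pathEdges (x :: t) = F then Pi.single x 1 - Pi.single y 1 else 0 := by
  funext a
  simp only [netFlow, outflow, stepCount, Nat.cast_add, Finset.sum_add_distrib, Pi.add_apply]
  split_ifs with hF
  · simp [hF, ite_and, Pi.single_apply, eq_comm (a := a)]
    ring
  · simp [hF]

theorem IsTrajectory.exists_netFlow_eq (h : IsTrajectory G v₁ l) (F : Finset (Sym2 V)) :
    ∃ s e : V, netFlow (fun a b => (stepCount l F a b : ℝ)) = Pi.single s 1 - Pi.single e 1 ∧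
      (pathEdges l = F → l.head? = some e) := by
  induction h with
  | start => exact ⟨v₁, v₁, by funext a; simp [netFlow, outflow, stepCount], fun _ => rfl⟩
  | @step x y t _ ht ih =>
    obtain ⟨s, e, hflow, hend⟩ := ih
    rw [netFlow_stepCount_cons_cons]
    split_ifs with hF
    · obtain rfl : x = e := Option.some_injective _ (hend hF)
      exact ⟨s, y, by rw [hflow]; abel, fun _ => rfl⟩
    · by_cases hF' : pathEdges (y :: x :: t) = F
      · have hzero : ∀ a b, stepCount (x :: t) F a b = 0 := fun a b => of_not_not fun hc =>
          hF <| (hF' ▸ Finset.subset_insert _ _ : pathEdges (x :: t) ⊆ F).antisymm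
            (ht.mem_pathEdges_of_stepCount_ne_zero hc).1
        exact ⟨y, y, by funext a; simp [netFlow, outflow, hzero], fun _ => rfl⟩
      · exact ⟨s, e, by rw [hflow, add_zero], fun h => absurd h hF'⟩

theorem IsTrajectory.abs_netFlow_le_one (h : IsTrajectory G v₁ l) (F : Finset (Sym2 V)) (a : V) :
    |netFlow (fun x y => (stepCount l F x y : ℝ)) a| ≤ 1 := by
  obtain ⟨s, e, hflow, -⟩ := h.exists_netFlow_eq F
  rw [hflow, Pi.sub_apply, Pi.single_apply, Pi.single_apply]
  split_ifs <;> norm_num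

end Trajectory

/-! ### Chains of traversed edge sets -/

section EdgeChain

variable {V : Type} {G : SimpleGraph V} {v₁ : V}

/-- `x` is the starting vertex or an endpoint of an edge in `c`. -/
def IsReached (v₁ : V) (c : List (Sym2 V)) (x : V) : Prop := x = v₁ ∨ ∃ e ∈ c, x ∈ e

/-- The edges of `G` listed in an order, latest first, in which a walk from `v₁` may discover
them. -/
inductive IsEdgeChain (G : SimpleGraph V) (v₁ : V) : List (Sym2 V) → Prop
  | nil : IsEdgeChain G v₁ []
  | cons {x : V} {e : Sym2 V} {c : List (Sym2 V)} (hc : IsEdgeChain G v₁ c) (heG : e ∈ G.edgeSet)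
      (hec : e ∉ c) (hxe : x ∈ e) (hx : IsReached v₁ c x) : IsEdgeChain G v₁ (e :: c)

namespace IsEdgeChain

variable {c c' : List (Sym2 V)}

theorem nodup (h : IsEdgeChain G v₁ c) : c.Nodup := by
  induction h with
  | nil => exact List.nodup_nil
  | cons _ _ hec _ _ ih => exact List.nodup_cons.2 ⟨hec, ih⟩

theorem mem_edgeSet (h : IsEdgeChain G v₁ c) {e : Sym2 V} (he : e ∈ c) : e ∈ G.edgeSet := by
  induction h with
  | nil => simp at he
  | cons _ heG _ _ _ ih =>
    rcases List.mem_cons.1 he with rfl | he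
    exacts [heG, ih he]

theorem of_suffix (h : IsEdgeChain G v₁ c) (hs : c' <:+ c) : IsEdgeChain G v₁ c' := by
  induction h with
  | nil => exact List.suffix_nil.1 hs ▸ .nil
  | cons hc heG hec hxe hx ih =>
    rcases List.suffix_cons_iff.1 hs with rfl | hs
    exacts [.cons hc heG hec hxe hx, ih hs]

theorem exists_start_mem (h : IsEdgeChain G v₁ c) (hne : c ≠ []) : ∃ e ∈ c, v₁ ∈ e := by
  induction h with
  | nil => exact absurd rfl hne
  | @cons x e c _ _ _ hxe hx ih =>
    by_cases hc : c = []
    · subst hc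
      obtain rfl : x = v₁ := by simpa [IsReached] using hx
      exact ⟨e, List.mem_cons_self, hxe⟩
    · obtain ⟨e', he', hv⟩ := ih hc
      exact ⟨e', List.mem_cons_of_mem _ he', hv⟩

theorem exists_adj_edge {e : Sym2 V} (h : IsEdgeChain G v₁ (e :: c)) (hne : c ≠ []) :
    ∃ e' ∈ c, edgeAdj e e' := by
  cases h with
  | cons hc _ _ hxe hx =>
    rcases hx with rfl | ⟨e', he', hxe'⟩
    · obtain ⟨e', he', hxe'⟩ := hc.exists_start_mem hne
      exact ⟨e', he', _, hxe, hxe'⟩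
    · exact ⟨e', he', _, hxe, hxe'⟩

theorem exists_cons (hG : G.Connected) (h : IsEdgeChain G v₁ c) {e₀ : Sym2 V}
    (he₀ : e₀ ∈ G.edgeSet) (he₀c : e₀ ∉ c) : ∃ e, IsEdgeChain G v₁ (e :: c) := by
  by_contra! hmax
  have hclosed : ∀ {a b : V}, IsReached v₁ c a → G.Adj a b → s(a, b) ∈ c := fun ha hab =>
    of_not_not fun hc => hmax _ (.cons h hab hc (Sym2.mem_mk_left _ _) ha)
  have hreached : ∀ x, IsReached v₁ c x := by
    intro x
    obtain ⟨w⟩ := hG.preconnected v₁ x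
    have hwalk : ∀ {a b : V}, G.Walk a b → IsReached v₁ c a → IsReached v₁ c b := by
      intro a b w
      induction w with
      | nil => exact id
      | cons hab _ ih => exact fun ha => ih (.inr ⟨_, hclosed ha hab, Sym2.mem_mk_right _ _⟩)
    exact hwalk w (.inl rfl)
  induction e₀ with
  | _ a b => exact he₀c (hclosed (hreached a) he₀)

variable [Fintype V] [DecidableRel G.Adj]

theorem length_le (h : IsEdgeChain G v₁ c) : c.length ≤ G.edgeFinset.card := by
  classical
  rw [← List.toFinset_card_of_nodup h.nodup]
  exact Finset.card_le_card fun e he =>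
    SimpleGraph.mem_edgeFinset.2 (h.mem_edgeSet (List.mem_toFinset.1 he))

theorem exists_extension (hG : G.Connected) (h : IsEdgeChain G v₁ c) :
    ∃ c', IsEdgeChain G v₁ c' ∧ c <:+ c' ∧ c'.length = G.edgeFinset.card := by
  classical
  induction hk : G.edgeFinset.card - c.length generalizing c with
  | zero => exact ⟨c, h, List.suffix_refl c, h.length_le.antisymm (by omega)⟩
  | succ k ih =>
    obtain ⟨e₀, he₀, he₀c⟩ : ∃ e ∈ G.edgeFinset, e ∉ c.toFinset :=
      Finset.exists_mem_notMem_of_card_lt_card (by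
        have := c.toFinset_card_le
        omega)
    obtain ⟨e, he⟩ := h.exists_cons hG (SimpleGraph.mem_edgeFinset.1 he₀)
      (mt List.mem_toFinset.2 he₀c)
    obtain ⟨c', hc', hs, hlen⟩ := ih he (by rw [List.length_cons]; omega)
    exact ⟨c', hc', (List.suffix_cons e c).trans hs, hlen⟩

end IsEdgeChain

variable [DecidableEq V]

/-- The increasing sequence of edge sets swept out by a chain `c` of length `b`; the `k`-th set
consists of the `k + 1` edges discovered first. -/
def chainSeq (b : ℕ) (c : List (Sym2 V)) (k : Fin b) : Finset (Sym2 V) :=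
  (c.drop (b - (k + 1))).toFinset

theorem toFinset_eq_chainSeq {b : ℕ} {c c' : List (Sym2 V)} (hs : c' <:+ c) (hc : c.length = b)
    (hc' : c' ≠ []) : ∃ k, c'.toFinset = chainSeq b c k := by
  have hpos : 0 < c'.length := List.length_pos_iff.2 hc'
  have hle : c'.length ≤ b := hc ▸ hs.length_le
  refine ⟨⟨c'.length - 1, by omega⟩, ?_⟩
  have hindex : b - (c'.length - 1 + 1) = c.length - c'.length := by omega
  simp only [chainSeq, hindex, ← List.suffix_iff_eq_drop.1 hs]

theorem IsTrajectory.exists_isEdgeChain {l : List V} (h : IsTrajectory G v₁ l) :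
    ∃ c, IsEdgeChain G v₁ c ∧ c.toFinset = pathEdges l ∧
      ∀ F x y, stepCount l F x y ≠ 0 → ∃ c', c' <:+ c ∧ c'.toFinset = F := by
  induction h with
  | start => exact ⟨[], .nil, rfl, fun F x y h => absurd rfl h⟩
  | @step x y t hxy ht ih =>
    obtain ⟨c, hc, hct, hsuff⟩ := ih
    have hsuff' : ∀ c₂, c <:+ c₂ → ∀ F a b, stepCount (y :: x :: t) F a b ≠ 0 →
        ∃ c', c' <:+ c₂ ∧ c'.toFinset = F := by
      intro c₂ hc₂ F a b hcount
      rcases stepCount_cons_cons_ne_zero hcount with hcount | ⟨rfl, -, -⟩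
      · obtain ⟨c', hc', hF⟩ := hsuff F a b hcount
        exact ⟨c', hc'.trans hc₂, hF⟩
      · exact ⟨c, hc₂, hct⟩
    by_cases hold : s(y, x) ∈ pathEdges (x :: t)
    · exact ⟨c, hc, by rw [hct, pathEdges, Finset.insert_eq_of_mem hold], hsuff' c c.suffix_refl⟩
    · have hx : IsReached v₁ c x := by
        simpa only [IsReached, ← List.mem_toFinset, hct] using ht.eq_start_or_mem_pathEdges
      refine ⟨s(y, x) :: c, .cons hc hxy.symm ?_ (Sym2.mem_mk_right _ _) hx, ?_,
        hsuff' _ (List.suffix_cons _ _)⟩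
      · rwa [← List.mem_toFinset, hct]
      · rw [List.toFinset_cons, hct, pathEdges]

variable [Fintype V] [DecidableRel G.Adj]

theorem IsEdgeChain.chainSeq_mem_seqE {c : List (Sym2 V)} (h : IsEdgeChain G v₁ c)
    (hc : c.length = G.edgeFinset.card) : chainSeq G.edgeFinset.card c ∈ seqE G v₁ := by
  have hdrop : ∀ j, IsEdgeChain G v₁ (c.drop j) := fun j => h.of_suffix (List.drop_suffix j c)
  have hlen : ∀ k : Fin G.edgeFinset.card,
      (c.drop (G.edgeFinset.card - (k + 1))).length = k + 1 := by
    intro k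
    rw [List.length_drop]
    omega
  have hstep : ∀ k l : Fin G.edgeFinset.card, (k : ℕ) + 1 = l →
      ∃ e, c.drop (G.edgeFinset.card - (l + 1)) = e :: c.drop (G.edgeFinset.card - (k + 1)) := by
    intro k l hkl
    have hcons := List.drop_eq_getElem_cons (l := c) (i := G.edgeFinset.card - (l + 1)) (by omega)
    rw [show G.edgeFinset.card - (l + 1) + 1 = G.edgeFinset.card - (k + 1) by omega] at hcons
    exact ⟨_, hcons⟩
  simp only [seqE, Set.mem_ofPred_eq, chainSeq]
  refine ⟨fun k e he => ?_, fun k => ?_, fun k l hkl => ?_, fun k _ => ?_, fun k l hkl e he => ?_⟩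
  · exact SimpleGraph.mem_edgeFinset.2 ((hdrop _).mem_edgeSet (List.mem_toFinset.1 he))
  · rw [List.toFinset_card_of_nodup (hdrop _).nodup, hlen]
  · obtain ⟨e, he⟩ := hstep k l hkl
    have hnodup := (hdrop (G.edgeFinset.card - (l + 1))).nodup
    rw [he] at hnodup ⊢
    rw [List.toFinset_cons]
    exact Finset.ssubset_insert (mt List.mem_toFinset.1 (List.nodup_cons.1 hnodup).1)
  · simp only [List.mem_toFinset]
    exact (hdrop _).exists_start_mem (List.ne_nil_of_length_eq_add_one (hlen k))
  · obtain ⟨e', he'⟩ := hstep k l hkl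
    obtain rfl : e = e' := by
      rw [he', List.toFinset_cons] at he
      grind
    simp only [List.mem_toFinset]
    exact (he' ▸ hdrop _ : IsEdgeChain G v₁ (e :: _)).exists_adj_edge
      (List.ne_nil_of_length_eq_add_one (hlen k))

theorem IsTrajectory.exists_mem_seqE (hG : G.Connected) {l : List V} (h : IsTrajectory G v₁ l) :
    ∃ Es ∈ seqE G v₁, ∀ F x y, F ≠ ∅ → stepCount l F x y ≠ 0 → ∃ k, F = Es k := by
  obtain ⟨c, hc, -, hsuff⟩ := h.exists_isEdgeChain
  obtain ⟨c', hc', hcc', hlen⟩ := hc.exists_extension hG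
  refine ⟨_, hc'.chainSeq_mem_seqE hlen, fun F x y hF hcount => ?_⟩
  obtain ⟨c₂, hc₂, rfl⟩ := hsuff F x y hcount
  exact toFinset_eq_chainSeq (hc₂.trans hcc') hlen fun hnil => hF (by rw [hnil, List.toFinset_nil])

theorem seqE_nonempty (hG : G.Connected) : (seqE G v₁).Nonempty :=
  let ⟨Es, hEs, _⟩ := (IsTrajectory.start : IsTrajectory G v₁ [v₁]).exists_mem_seqE hG
  ⟨Es, hEs⟩

end EdgeChain

/-! ### Flows and their entropy -/

section FlowEntropy

/-- The flow of unit intensity in both directions along every edge of `F`. -/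
def edgeIndicator {V : Type*} (F : Finset (Sym2 V)) (x y : V) : ℝ :=
  (F : Set (Sym2 V)).indicator 1 s(x, y)

theorem edgeIndicator_of_mem {V : Type*} {F : Finset (Sym2 V)} {x y : V} (h : s(x, y) ∈ F) :
    edgeIndicator F x y = 1 :=
  Set.indicator_of_mem (Finset.mem_coe.2 h) _

theorem memVerts_iff {V : Type} {F : Finset (Sym2 V)} {x : V} :
    memVerts F x ↔ ∃ y, s(x, y) ∈ F := by
  constructor
  · rintro ⟨e, he, y, rfl⟩
    exact ⟨y, he⟩
  · rintro ⟨y, hy⟩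
    exact ⟨_, hy, Sym2.mem_mk_left _ _⟩

variable {V : Type*} [Fintype V]

/-- A nonnegative edge measure carried by `F` which enters and leaves every vertex with the same
mass. These are the unnormalized two-step marginals of stationary chains moving along `F`. -/
structure IsFlow (F : Finset (Sym2 V)) (m : V → V → ℝ) : Prop where
  nonneg : ∀ x y, 0 ≤ m x y
  eq_zero_of_notMem : ∀ x y, s(x, y) ∉ F → m x y = 0
  netFlow_eq_zero : ∀ x, netFlow m x = 0

/-- The relative entropy `∫ R(q‖p) dν` of the edge measure `m(x, y) = ν(x) q(x, y)`, expressed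
through `m`; it is meaningful where `p` is positive on the support of `m`. -/
def flowEntropy (p m : V → V → ℝ) : ℝ :=
  ∑ x, ∑ y, m x y * (Real.log (m x y) - Real.log (outflow m x) - Real.log (p x y))

theorem outflow_nonneg {m : V → V → ℝ} (hm : ∀ x y, 0 ≤ m x y) (x : V) : 0 ≤ outflow m x :=
  Finset.sum_nonneg fun y _ => hm x y

theorem mass_nonneg {m : V → V → ℝ} (hm : ∀ x y, 0 ≤ m x y) : 0 ≤ mass m :=
  Finset.sum_nonneg fun x _ => outflow_nonneg hm x

theorem le_outflow {m : V → V → ℝ} (hm : ∀ x y, 0 ≤ m x y) (x y : V) : m x y ≤ outflow m x :=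
  Finset.single_le_sum (fun z _ => hm x z) (Finset.mem_univ y)

theorem outflow_le_mass {m : V → V → ℝ} (hm : ∀ x y, 0 ≤ m x y) (x : V) : outflow m x ≤ mass m :=
  Finset.single_le_sum (fun z _ => outflow_nonneg hm z) (Finset.mem_univ x)

theorem eq_zero_of_outflow_eq_zero {m : V → V → ℝ} (hm : ∀ x y, 0 ≤ m x y) {x : V}
    (hx : outflow m x = 0) (y : V) : m x y = 0 :=
  ((le_outflow hm x y).trans_eq hx).antisymm (hm x y)

theorem IsFlow.sum_inflow {F : Finset (Sym2 V)} {m : V → V → ℝ} (h : IsFlow F m) (x : V) :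
    ∑ y, m y x = outflow m x :=
  (sub_eq_zero.1 (h.netFlow_eq_zero x)).symm

theorem continuous_outflow (x : V) : Continuous fun m : V → V → ℝ => outflow m x := by
  unfold outflow
  fun_prop

theorem continuous_netFlow (x : V) : Continuous fun m : V → V → ℝ => netFlow m x :=
  (continuous_outflow x).sub (by fun_prop)

theorem continuous_mass : Continuous fun m : V → V → ℝ => mass m :=
  continuous_finsetSum _ fun x _ => continuous_outflow x

theorem isClosed_isFlow (F : Finset (Sym2 V)) : IsClosed {m : V → V → ℝ | IsFlow F m} := by
  have hset : {m : V → V → ℝ | IsFlow F m} = (⋂ x, ⋂ y, {m | 0 ≤ m x y}) ∩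
      ((⋂ x, ⋂ y, ⋂ _ : s(x, y) ∉ F, {m | m x y = 0}) ∩ ⋂ x, {m | netFlow m x = 0}) := by
    ext m
    simp only [Set.mem_inter_iff, Set.mem_iInter, Set.mem_ofPred_eq]
    exact ⟨fun h => ⟨h.1, h.2, h.3⟩, fun h => ⟨h.1, h.2.1, h.2.2⟩⟩
  rw [hset]
  refine .inter ?_ (.inter ?_ ?_)
  · exact isClosed_iInter fun x => isClosed_iInter fun y =>
      isClosed_le continuous_const (by fun_prop)
  · exact isClosed_iInter fun x => isClosed_iInter fun y => isClosed_iInter fun _ =>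
      isClosed_eq (by fun_prop) continuous_const
  · exact isClosed_iInter fun x => isClosed_eq (continuous_netFlow x) continuous_const

theorem continuous_flowEntropy (p : V → V → ℝ) : Continuous (flowEntropy p) := by
  have hsplit : flowEntropy p = fun m => ∑ x, ((∑ y, (m x y * Real.log (m x y) -
      m x y * Real.log (p x y))) - outflow m x * Real.log (outflow m x)) := by
    funext m
    refine Finset.sum_congr rfl fun x _ => ?_
    nth_rw 2 [outflow]
    rw [Finset.sum_mul, ← Finset.sum_sub_distrib]
    exact Finset.sum_congr rfl fun y _ => by ring
  rw [hsplit]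
  refine continuous_finsetSum _ fun x _ => .sub ?_ ?_
  · refine continuous_finsetSum _ fun y _ => .sub ?_ (by fun_prop)
    exact Real.continuous_mul_log.comp (f := fun m : V → V → ℝ => m x y) (by fun_prop)
  · exact Real.continuous_mul_log.comp (continuous_outflow x)

theorem isFlow_edgeIndicator (F : Finset (Sym2 V)) : IsFlow F (edgeIndicator F) where
  nonneg _ _ := Set.indicator_nonneg (fun _ _ => zero_le_one) _
  eq_zero_of_notMem _ _ h := Set.indicator_of_notMem (mt Finset.mem_coe.1 h) _
  netFlow_eq_zero x := by simp only [netFlow, outflow, edgeIndicator, Sym2.eq_swap, sub_self]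

end FlowEntropy

section FlowKernel

variable {V : Type} [Fintype V] {F : Finset (Sym2 V)} {m : V → V → ℝ}

theorem outflow_edgeIndicator_pos {x : V} (hx : memVerts F x) : 0 < outflow (edgeIndicator F) x :=
  let ⟨y, hy⟩ := memVerts_iff.1 hx
  (edgeIndicator_of_mem hy ▸ zero_lt_one).trans_le
    (le_outflow (isFlow_edgeIndicator F).nonneg x y)

theorem mass_edgeIndicator_pos (hF : F.Nonempty) : 0 < mass (edgeIndicator F) := by
  obtain ⟨e, he⟩ := hF
  induction e with
  | _ x y =>
    exact (outflow_edgeIndicator_pos (memVerts_iff.2 ⟨y, he⟩)).trans_le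
      (outflow_le_mass (isFlow_edgeIndicator F).nonneg x)

/-- The kernel of which `m` is the two-step marginal; it is uniform along `F` at the vertices that
`m` does not charge. -/
def flowKernel (F : Finset (Sym2 V)) (m : V → V → ℝ) (x y : V) : ℝ :=
  if outflow m x = 0 then edgeIndicator F x y / outflow (edgeIndicator F) x
  else m x y / outflow m x

theorem outflow_mul_flowKernel (hm : ∀ x y, 0 ≤ m x y) (x y : V) :
    outflow m x * flowKernel F m x y = m x y := by
  by_cases hx : outflow m x = 0
  · rw [hx, zero_mul, eq_zero_of_outflow_eq_zero hm hx]
  · rw [flowKernel, if_neg hx, mul_div_cancel₀ _ hx]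

theorem flowKernel_nonneg (hm : ∀ x y, 0 ≤ m x y) (x y : V) : 0 ≤ flowKernel F m x y := by
  have hu := (isFlow_edgeIndicator F).nonneg
  unfold flowKernel
  split_ifs
  exacts [div_nonneg (hu x y) (outflow_nonneg hu x), div_nonneg (hm x y) (outflow_nonneg hm x)]

theorem sum_flowKernel_le_one (F : Finset (Sym2 V)) (m : V → V → ℝ) (x : V) :
    ∑ y, flowKernel F m x y ≤ 1 := by
  unfold flowKernel
  split_ifs <;> rw [← Finset.sum_div] <;> exact div_self_le_one _

theorem sum_flowKernel {x : V} (hx : memVerts F x) : ∑ y, flowKernel F m x y = 1 := by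
  unfold flowKernel
  split_ifs with hzero <;> rw [← Finset.sum_div]
  exacts [div_self (outflow_edgeIndicator_pos hx).ne', div_self hzero]

theorem IsFlow.flowKernel_mem_TE (h : IsFlow F m) : flowKernel F m ∈ TE F := by
  refine ⟨flowKernel_nonneg h.nonneg, fun x hx => sum_flowKernel hx, fun x y => ?_⟩
  contrapose
  intro hxy
  simp [flowKernel, h.eq_zero_of_notMem x y hxy,
    (isFlow_edgeIndicator F).eq_zero_of_notMem x y hxy]

theorem IsFlow.memVerts_of_outflow_ne_zero (h : IsFlow F m) {x : V} (hx : outflow m x ≠ 0) :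
    memVerts F x := by
  obtain ⟨y, -, hy⟩ := Finset.exists_ne_zero_of_sum_ne_zero hx
  exact memVerts_iff.2 ⟨y, of_not_not fun hxy => hy (h.eq_zero_of_notMem x y hxy)⟩

theorem IsFlow.exists_stationary_of_mass_pos (h : IsFlow F m) (hm : 0 < mass m) :
    ∃ (ν : ProbMeas V) (q : V → V → ℝ), q ∈ TE F ∧ (∀ x, ν.1 x ≠ 0 → memVerts F x) ∧
      Invariant ν.1 q ∧ ∀ x y, m x y = mass m * (ν.1 x * q x y) := by
  let ν : ProbMeas V := ⟨fun x => outflow m x / mass m,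
    fun x => div_nonneg (outflow_nonneg h.nonneg x) hm.le,
    by rw [← Finset.sum_div]; exact div_self hm.ne'⟩
  refine ⟨ν, flowKernel F m, h.flowKernel_mem_TE, fun x hx => ?_, fun y => ?_, fun x y => ?_⟩
  · exact h.memVerts_of_outflow_ne_zero fun hzero => hx (by simp [ν, hzero])
  · simp only [ν, div_mul_eq_mul_div, outflow_mul_flowKernel h.nonneg, ← Finset.sum_div,
      h.sum_inflow]
  · simp only [ν, div_mul_eq_mul_div, outflow_mul_flowKernel h.nonneg, mul_div_cancel₀ _ hm.ne']

theorem IsFlow.exists_stationary (h : IsFlow F m) (hF : F.Nonempty) :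
    ∃ (ν : ProbMeas V) (q : V → V → ℝ), q ∈ TE F ∧ (∀ x, ν.1 x ≠ 0 → memVerts F x) ∧
      Invariant ν.1 q ∧ ∀ x y, m x y = mass m * (ν.1 x * q x y) := by
  rcases (mass_nonneg h.nonneg).eq_or_lt with hm | hm
  · obtain ⟨ν, q, hq, hν, hinv, -⟩ :=
      (isFlow_edgeIndicator F).exists_stationary_of_mass_pos (mass_edgeIndicator_pos hF)
    refine ⟨ν, q, hq, hν, hinv, fun x y => ?_⟩
    rw [← hm, zero_mul]
    exact ((le_outflow h.nonneg x y).trans ((outflow_le_mass h.nonneg x).trans hm.ge)).antisymm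
      (h.nonneg x y)
  · exact h.exists_stationary_of_mass_pos hm

end FlowKernel

/-! ### The rate function as an infimum over families of flows -/

section Rate

theorem ereal_coe_sum {ι : Type*} (s : Finset ι) (f : ι → ℝ) :
    ((∑ i ∈ s, f i : ℝ) : EReal) = ∑ i ∈ s, (f i : EReal) :=
  map_sum (⟨⟨Real.toEReal, EReal.coe_zero⟩, EReal.coe_add⟩ : ℝ →+ EReal) f s

/-- Families of flows along the edge sets `Es k` whose total mass is `1`. -/
def flowFamilies {V : Type*} [Fintype V] {ι : Type*} [Fintype ι] (Es : ι → Finset (Sym2 V)) :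
    Set (ι → V → V → ℝ) :=
  {M | (∀ k, IsFlow (Es k) (M k)) ∧ ∑ k, mass (M k) = 1}

theorem isCompact_flowFamilies {V : Type*} [Fintype V] {ι : Type*} [Fintype ι]
    (Es : ι → Finset (Sym2 V)) : IsCompact (flowFamilies Es) := by
  have hbox : IsCompact (Set.univ.pi fun _ : ι => Set.univ.pi fun _ : V =>
      Set.univ.pi fun _ : V => Set.Icc (0 : ℝ) 1) :=
    isCompact_univ_pi fun _ => isCompact_univ_pi fun _ => isCompact_univ_pi fun _ => isCompact_Icc
  refine hbox.of_isClosed_subset ?_ ?_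
  · have hset : flowFamilies Es =
        (⋂ k, {M | IsFlow (Es k) (M k)}) ∩ {M | ∑ k, mass (M k) = 1} := by
      ext M
      simp [flowFamilies]
    rw [hset]
    exact (isClosed_iInter fun k => (isClosed_isFlow (Es k)).preimage (continuous_apply k)).inter
      (isClosed_eq (continuous_finsetSum _ fun k _ => continuous_mass.comp (continuous_apply k))
        continuous_const)
  · rintro M ⟨hflow, hmass⟩ k - x - y -
    have hM := fun j => (hflow j).nonneg
    refine ⟨hM k x y, ?_⟩
    calc M k x y ≤ mass (M k) := (le_outflow (hM k) x y).trans (outflow_le_mass (hM k) x)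
      _ ≤ ∑ j, mass (M j) :=
        Finset.single_le_sum (fun j _ => mass_nonneg (hM j)) (Finset.mem_univ k)
      _ = 1 := hmass

theorem adj_of_mem {V : Type*} {G : SimpleGraph V} [Fintype G.edgeSet] {F : Finset (Sym2 V)}
    (hF : F ⊆ G.edgeFinset) {x y : V} (h : s(x, y) ∈ F) : G.Adj x y :=
  SimpleGraph.mem_edgeFinset.1 (hF h)

theorem outflow_const_mul_kernel {V : Type} [Fintype V] {F : Finset (Sym2 V)} {q : V → V → ℝ}
    (hq : q ∈ TE F) {ν : V → ℝ} (hν : ∀ x, ν x ≠ 0 → memVerts F x) (r : ℝ) (x : V) :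
    outflow (fun x y => r * (ν x * q x y)) x = r * ν x := by
  rw [outflow, ← Finset.mul_sum, ← Finset.mul_sum]
  by_cases hx : ν x = 0
  · rw [hx, zero_mul]
  · rw [hq.2.1 x (hν x hx), mul_one]

variable {V : Type} [Fintype V] [DecidableEq V] {G : SimpleGraph V} [DecidableRel G.Adj]
  {v₁ : V} {δ : ℝ}

/-- The cost `∑ k, r k ∫ R(q k‖p̂ (Es k)) dν k` of a family of flows
`M k (x, y) = r k · ν k (x) · q k (x, y)`. -/
def flowCost (G : SimpleGraph V) [DecidableRel G.Adj] (δ : ℝ) {ι : Type*} [Fintype ι]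
    (Es : ι → Finset (Sym2 V)) (M : ι → V → V → ℝ) : ℝ :=
  ∑ k, flowEntropy (phat G δ (Es k)) (M k)

theorem continuous_flowCost {ι : Type*} [Fintype ι] (Es : ι → Finset (Sym2 V)) :
    Continuous (flowCost G δ Es) :=
  continuous_finsetSum _ fun k _ => (continuous_flowEntropy _).comp (continuous_apply k)

theorem relEntInt_phat (hδ : 0 < δ) {F : Finset (Sym2 V)} (hF : F ⊆ G.edgeFinset)
    {q : V → V → ℝ} (hq : q ∈ TE F) (ν : V → ℝ) :
    relEntInt ν q (phat G δ F) =
      ((∑ x, ν x * ∑ y, q x y * Real.log (q x y / phat G δ F x y) : ℝ) : EReal) := by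
  rw [relEntInt, ereal_coe_sum]
  refine Finset.sum_congr rfl fun x _ => ?_
  have hac : ∀ y, phat G δ F x y = 0 → q x y = 0 := fun y hp => of_not_not fun hxy =>
    (phat_pos hδ F (adj_of_mem hF (hq.2.2 x y hxy))).ne' hp
  rw [EReal.coe_mul, relEnt, if_pos hac]

theorem coe_flowEntropy_const_mul_kernel (hδ : 0 < δ) {F : Finset (Sym2 V)}
    (hF : F ⊆ G.edgeFinset) {q : V → V → ℝ} (hq : q ∈ TE F) {ν : V → ℝ}
    (hν : ∀ x, ν x ≠ 0 → memVerts F x) (r : ℝ) :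
    (flowEntropy (phat G δ F) (fun x y => r * (ν x * q x y)) : EReal) =
      r * relEntInt ν q (phat G δ F) := by
  rw [relEntInt_phat hδ hF hq, ← EReal.coe_mul, flowEntropy, Finset.mul_sum]
  simp only [outflow_const_mul_kernel hq hν, Finset.mul_sum]
  congr 1
  refine Finset.sum_congr rfl fun x _ => Finset.sum_congr rfl fun y _ => ?_
  by_cases hzero : r * (ν x * q x y) = 0
  · linear_combination (Real.log (r * (ν x * q x y)) - Real.log (r * ν x) -
      Real.log (phat G δ F x y) - Real.log (q x y / phat G δ F x y)) * hzero
  · have hr : r ≠ 0 := left_ne_zero_of_mul hzero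
    have hνx : ν x ≠ 0 := left_ne_zero_of_mul (right_ne_zero_of_mul hzero)
    have hqxy : q x y ≠ 0 := right_ne_zero_of_mul (right_ne_zero_of_mul hzero)
    have hp : phat G δ F x y ≠ 0 := (phat_pos hδ F (adj_of_mem hF (hq.2.2 x y hqxy))).ne'
    rw [Real.log_div hqxy hp, ← mul_assoc r, Real.log_mul (mul_ne_zero hr hνx) hqxy]
    ring

variable {Es : Fin G.edgeFinset.card → Finset (Sym2 V)}

theorem nonempty_of_mem_seqE (hEs : Es ∈ seqE G v₁) (k : Fin G.edgeFinset.card) :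
    (Es k).Nonempty := by
  rw [← Finset.card_pos, hEs.2.1 k]
  exact Nat.succ_pos _

theorem Ifun_le_flowCost (hδ : 0 < δ) (hEs : Es ∈ seqE G v₁)
    {M : Fin G.edgeFinset.card → V → V → ℝ} (hM : M ∈ flowFamilies Es) {ν : ProbMeas V}
    (hν : ∀ x, ∑ k, outflow (M k) x = ν.1 x) : Ifun G v₁ δ ν ≤ (flowCost G δ Es M : EReal) := by
  choose νs qs hqs hνs hinv hMk using fun k =>
    (hM.1 k).exists_stationary (nonempty_of_mem_seqE hEs k)
  have hMk' : ∀ k, M k = fun x y => mass (M k) * ((νs k).1 x * qs k x y) := fun k => by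
    funext x y
    exact hMk k x y
  refine sInf_le ⟨νs, fun k => mass (M k), Es, qs, hEs, fun k => mass_nonneg (hM.1 k).nonneg,
    hM.2, hνs, fun x => ?_, hqs, hinv, ?_⟩
  · rw [← hν]
    refine Finset.sum_congr rfl fun k _ => ?_
    rw [← outflow_const_mul_kernel (hqs k) (hνs k), ← hMk']
  · rw [flowCost, ereal_coe_sum]
    refine Finset.sum_congr rfl fun k _ => ?_
    rw [← coe_flowEntropy_const_mul_kernel hδ (hEs.1 k) (hqs k) (hνs k), ← hMk']

theorem exists_flow_of_Ifun_lt (hδ : 0 < δ) {ν : ProbMeas V} {β : EReal}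
    (hβ : Ifun G v₁ δ ν < β) :
    ∃ Es ∈ seqE G v₁, ∃ M ∈ flowFamilies Es, (∀ x, ∑ k, outflow (M k) x = ν.1 x) ∧
      (flowCost G δ Es M : EReal) < β := by
  obtain ⟨c, ⟨νs, r, Es, qs, hEs, hr, hr₁, hνs, hν, hqs, hinv, rfl⟩, hcβ⟩ := sInf_lt_iff.1 hβ
  have hout := fun k => outflow_const_mul_kernel (hqs k) (hνs k) (r k)
  refine ⟨Es, hEs, fun k x y => r k * ((νs k).1 x * qs k x y), ⟨fun k => ⟨fun x y => ?_,
    fun x y hxy => ?_, fun x => ?_⟩, ?_⟩, fun x => ?_, ?_⟩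
  · exact mul_nonneg (hr k) (mul_nonneg ((νs k).2.1 x) ((hqs k).1 x y))
  · have hq : qs k x y = 0 := of_not_not fun hq => hxy ((hqs k).2.2 x y hq)
    simp only [hq, mul_zero]
  · rw [netFlow, hout, ← Finset.mul_sum, hinv k x, sub_self]
  · simp only [mass, hout, ← Finset.mul_sum, (νs _).2.2, mul_one, hr₁]
  · simp only [hout, hν]
  · refine lt_of_eq_of_lt ?_ hcβ
    rw [flowCost, ereal_coe_sum]
    exact Finset.sum_congr rfl fun k _ =>
      coe_flowEntropy_const_mul_kernel hδ (hEs.1 k) (hqs k) (hνs k) (r k)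

theorem isClosed_Ifun_le (hδ : 0 < δ) (β : EReal) : IsClosed {ν | Ifun G v₁ δ ν ≤ β} := by
  have hset : {ν | Ifun G v₁ δ ν ≤ β} = ⋂ (b : ℝ) (_ : β < b),
      ⋃ Es ∈ seqE G v₁, Subtype.val ⁻¹' ((fun M x => ∑ k, outflow (M k) x) ''
        (flowFamilies Es ∩ {M | flowCost G δ Es M ≤ b})) := by
    ext ν
    simp only [Set.mem_ofPred_eq, Set.mem_iInter, Set.mem_iUnion, Set.mem_preimage]
    constructor
    · intro hν b hb
      obtain ⟨Es, hEs, M, hM, hMν, hcost⟩ := exists_flow_of_Ifun_lt hδ (hν.trans_lt hb)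
      exact ⟨Es, hEs, M, ⟨hM, EReal.coe_le_coe_iff.1 hcost.le⟩, funext hMν⟩
    · refine fun h => EReal.le_of_forall_lt_iff_le.1 fun b hb => ?_
      obtain ⟨Es, hEs, M, ⟨hM, hcost⟩, hMν⟩ := h b hb
      exact (Ifun_le_flowCost hδ hEs hM (congrFun hMν)).trans (EReal.coe_le_coe_iff.2 hcost)
  rw [hset]
  refine isClosed_iInter fun b => isClosed_iInter fun _ =>
    (Set.toFinite _).isClosed_biUnion fun Es _ => .preimage continuous_subtype_val ?_
  refine (IsCompact.image ?_ ?_).isClosed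
  · exact (isCompact_flowFamilies Es).inter_right
      (isClosed_le (continuous_flowCost Es) continuous_const)
  · exact continuous_pi fun x => continuous_finsetSum _ fun k _ =>
      (continuous_outflow x).comp (continuous_apply k)

theorem lowerSemicontinuous_Ifun (hδ : 0 < δ) : LowerSemicontinuous (Ifun G v₁ δ) :=
  lowerSemicontinuous_iff_isClosed_preimage.2 (isClosed_Ifun_le hδ)

instance : CompactSpace (ProbMeas V) := isCompact_iff_compactSpace.1 (isCompact_stdSimplex ℝ V)

theorem isCompact_Ifun_le (hδ : 0 < δ) (β : EReal) : IsCompact {ν | Ifun G v₁ δ ν ≤ β} :=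
  (isClosed_Ifun_le hδ β).isCompact

end Rate

/-! ### The upper bound: counting types -/

section Types

theorem flowEntropy_const_mul {V : Type*} [Fintype V] (p : V → V → ℝ) {m : V → V → ℝ}
    (hm : ∀ x y, 0 ≤ m x y) {s : ℝ} (hs : s ≠ 0) :
    flowEntropy p (fun x y => s * m x y) = s * flowEntropy p m := by
  simp only [flowEntropy, Finset.mul_sum]
  refine Finset.sum_congr rfl fun x _ => Finset.sum_congr rfl fun y _ => ?_
  have hout : outflow (fun x y => s * m x y) x = s * outflow m x := (Finset.mul_sum _ _ _).symm
  by_cases hxy : m x y = 0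
  · simp only [hxy, mul_zero, zero_mul]
  · have hx : outflow m x ≠ 0 := fun hx => hxy (eq_zero_of_outflow_eq_zero hm hx y)
    rw [hout, Real.log_mul hs hxy, Real.log_mul hs hx]
    ring

theorem prod_pow_eq_exp_neg_flowEntropy_mul {V : Type} [Fintype V] {p : V → V → ℝ}
    {N : V → V → ℕ} (hp : ∀ x y, N x y ≠ 0 → 0 < p x y) (F : Finset (Sym2 V)) :
    ∏ x, ∏ y, p x y ^ N x y = Real.exp (-flowEntropy p fun x y => N x y) *
      ∏ x, ∏ y, flowKernel F (fun x y => (N x y : ℝ)) x y ^ N x y := by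
  simp only [flowEntropy, ← Finset.sum_neg_distrib, Real.exp_sum, ← Finset.prod_mul_distrib]
  refine Finset.prod_congr rfl fun x _ => Finset.prod_congr rfl fun y _ => ?_
  by_cases hN : N x y = 0
  · simp [hN]
  have hm : ∀ x y, (0 : ℝ) ≤ N x y := fun _ _ => Nat.cast_nonneg _
  have hNxy : (0 : ℝ) < N x y := Nat.cast_pos.2 (Nat.pos_of_ne_zero hN)
  have hout := hNxy.trans_le (le_outflow hm x y)
  have hq := div_pos hNxy hout
  rw [flowKernel, if_neg hout.ne', ← Real.exp_log (pow_pos (hp x y hN) _),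
    ← Real.exp_log (pow_pos hq _), ← Real.exp_add, Real.log_pow, Real.log_pow,
    Real.log_div hNxy.ne' hout.ne']
  congr 1
  ring

variable {V : Type} [Fintype V]

/-- The kernel that maximizes the probability of the trajectories with step counts `N`. -/
def typeKernel (N : Finset (Sym2 V) → V → V → ℕ) (F : Finset (Sym2 V)) : V → V → ℝ :=
  flowKernel F fun x y => N F x y

theorem typeKernel_nonneg (N : Finset (Sym2 V) → V → V → ℕ) (F : Finset (Sym2 V)) (x y : V) :
    0 ≤ typeKernel N F x y :=
  flowKernel_nonneg (fun _ _ => Nat.cast_nonneg _) x y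

/-- The possible step counts of trajectories of length `n`. -/
def types (V : Type) [Fintype V] (n : ℕ) : Finset (Finset (Sym2 V) → V → V → ℕ) :=
  Fintype.piFinset fun _ => Fintype.piFinset fun _ => Fintype.piFinset fun _ =>
    Finset.range (n + 1)

theorem card_types (n : ℕ) : (types V n).card =
    (n + 1) ^ (Fintype.card V * Fintype.card V * Fintype.card (Finset (Sym2 V))) := by
  simp only [types, Fintype.card_piFinset, Finset.prod_const, Finset.card_univ,
    Finset.card_range, pow_mul]

variable [DecidableEq V]

theorem stepCount_mem_types {n : ℕ} {l : List V} (hl : l.length = n + 1) :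
    stepCount l ∈ types V n := by
  simp only [types, Fintype.mem_piFinset, Finset.mem_range, Nat.lt_succ_iff]
  intro F x y
  have hle : stepCount l F x y ≤ ∑ F, ∑ x, ∑ y, stepCount l F x y :=
    (Finset.single_le_sum (fun _ _ => Nat.zero_le _) (Finset.mem_univ y)).trans <|
      (Finset.single_le_sum (f := fun x => ∑ y, stepCount l F x y) (fun _ _ => Nat.zero_le _)
        (Finset.mem_univ x)).trans <|
      Finset.single_le_sum (f := fun F => ∑ x, ∑ y, stepCount l F x y) (fun _ _ => Nat.zero_le _)
        (Finset.mem_univ F)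
  rwa [sum_stepCount, hl, Nat.add_sub_cancel] at hle

/-- The proportion of the steps of a history that go from `x` to `y` while the set of traversed
edges is `F`; it is normalized by the number of positions, as `empFreq`. -/
def empFlow (l : List V) (F : Finset (Sym2 V)) (x y : V) : ℝ := (l.length : ℝ)⁻¹ * stepCount l F x y

variable {G : SimpleGraph V} [DecidableRel G.Adj] {v₁ : V} {δ : ℝ}

theorem flowCost_stepCount {l : List V} (hl : l ≠ []) :
    flowCost G δ id (fun F x y => (stepCount l F x y : ℝ)) =
      l.length * flowCost G δ id (empFlow l) := by
  have hlen : (l.length : ℝ) ≠ 0 := Nat.cast_ne_zero.2 fun h => hl (List.length_eq_zero_iff.1 h)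
  rw [flowCost, flowCost, Finset.mul_sum]
  refine Finset.sum_congr rfl fun F _ => ?_
  have hscale := flowEntropy_const_mul (phat G δ F) (m := fun x y => (stepCount l F x y : ℝ))
    (fun _ _ => Nat.cast_nonneg _) (inv_ne_zero hlen)
  exact (mul_inv_cancel_left₀ hlen _).symm.trans (congrArg _ hscale.symm)

theorem IsTrajectory.pathWeight_eq_exp_mul (hδ : 0 < δ) {u : List V}
    (h : IsTrajectory G v₁ (u ++ [v₁])) :
    pathWeight (stepKernel (phat G δ)) [v₁] u =
      Real.exp (-((u ++ [v₁]).length * flowCost G δ id (empFlow (u ++ [v₁])))) *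
        pathWeight (stepKernel (typeKernel (stepCount (u ++ [v₁])))) [v₁] u := by
  rw [← flowCost_stepCount (by simp), pathWeight_eq_prod, pathWeight_eq_prod, flowCost,
    ← Finset.sum_neg_distrib, Real.exp_sum, ← Finset.prod_mul_distrib]
  exact Finset.prod_congr rfl fun F _ => prod_pow_eq_exp_neg_flowEntropy_mul
    (fun x y hxy => phat_pos hδ F (h.adj_of_stepCount_ne_zero hxy)) F

theorem IsTrajectory.pathWeight_le (hδ : 0 < δ) {u : List V} (h : IsTrajectory G v₁ (u ++ [v₁]))
    {α : ℝ} (hα : α ≤ flowCost G δ id (empFlow (u ++ [v₁]))) :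
    pathWeight (stepKernel (phat G δ)) [v₁] u ≤ Real.exp (-((u.length + 1) * α)) *
      ∑ N ∈ types V u.length, pathWeight (stepKernel (typeKernel N)) [v₁] u := by
  have hnonneg := fun N : Finset (Sym2 V) → V → V → ℕ =>
    pathWeight_nonneg (stepKernel_nonneg (typeKernel_nonneg N)) [v₁] u
  rw [h.pathWeight_eq_exp_mul hδ]
  refine mul_le_mul (Real.exp_le_exp.2 (neg_le_neg ?_)) ?_ (hnonneg _) (Real.exp_pos _).le
  · rw [List.length_append, List.length_singleton, Nat.cast_succ]
    gcongr
  · exact Finset.single_le_sum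
      (f := fun N => pathWeight (stepKernel (typeKernel N)) [v₁] u) (fun N _ => hnonneg N)
      (stepCount_mem_types (by simp))

theorem pathProb_le_card_types_mul_exp (hδ : 0 < δ) {n : ℕ} {S : Set (List V)} {α : ℝ}
    (hα : ∀ u, u.length = n → IsTrajectory G v₁ (u ++ [v₁]) → u ++ [v₁] ∈ S →
      α ≤ flowCost G δ id (empFlow (u ++ [v₁]))) :
    pathProb (stepKernel (phat G δ)) n S [v₁] ≤
      (types V n).card * Real.exp (-((n + 1) * α)) := by
  set c := Real.exp (-((n + 1) * α))
  set w := fun N => pathWeight (stepKernel (typeKernel (V := V) N)) [v₁]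
  have hw : ∀ N u, 0 ≤ w N u := fun N =>
    pathWeight_nonneg (stepKernel_nonneg (typeKernel_nonneg N)) [v₁]
  have htotal : ∀ N, ∑ u : Fin n → V, w N (List.ofFn u).reverse ≤ 1 := fun N => by
    simpa [pathExp_eq_sum] using pathExp_one_le_one (stepKernel_nonneg (typeKernel_nonneg N))
      (sum_stepKernel_le_one fun F => sum_flowKernel_le_one F _) n [v₁]
  rw [pathProb, pathExp_eq_sum]
  calc _ ≤ ∑ u : Fin n → V, c * ∑ N ∈ types V n, w N (List.ofFn u).reverse := by
        refine Finset.sum_le_sum fun u _ => ?_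
        have hlen : (List.ofFn u).reverse.length = n := by simp
        generalize (List.ofFn u).reverse = t at hlen
        by_cases ht : pathWeight (stepKernel (phat G δ)) [v₁] t * S.indicator 1 (t ++ [v₁]) = 0
        · exact ht.trans_le
            (mul_nonneg (Real.exp_pos _).le (Finset.sum_nonneg fun N _ => hw N t))
        · have htraj := isTrajectory_of_pathWeight_ne_zero (left_ne_zero_of_mul ht)
          have hS := Set.mem_of_indicator_ne_zero (right_ne_zero_of_mul ht)
          rw [Set.indicator_of_mem hS, Pi.one_apply, mul_one]
          subst hlen
          exact htraj.pathWeight_le hδ (hα t rfl htraj hS)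
    _ = ∑ N ∈ types V n, c * ∑ u : Fin n → V, w N (List.ofFn u).reverse := by
        simp only [Finset.mul_sum]
        exact Finset.sum_comm
    _ ≤ ∑ _ ∈ types V n, c :=
        Finset.sum_le_sum fun N _ => mul_le_of_le_one_right (Real.exp_pos _).le (htotal N)
    _ = _ := by rw [Finset.sum_const, nsmul_eq_mul]

end Types

section ApproxCirculation

variable {V : Type} [Fintype V] [DecidableEq V] {G : SimpleGraph V} [DecidableRel G.Adj]
  {v₁ : V} {δ ε : ℝ} {M : Finset (Sym2 V) → V → V → ℝ} {ν : V → ℝ}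

/-- Up to an error `ε`, the edge measures `M F` are flows along the sets `F` of an admissible
sequence, of total mass `1` and marginal `ν`. Empirical flows of long trajectories have this
property; the empty set is excluded from the last condition because the first step of the walk is
taken before any edge is traversed. -/
structure IsApproxCirculation (G : SimpleGraph V) [DecidableRel G.Adj] (v₁ : V) (ε : ℝ)
    (M : Finset (Sym2 V) → V → V → ℝ) (ν : V → ℝ) : Prop where
  nonneg : ∀ F x y, 0 ≤ M F x y
  le_of_notMem : ∀ F x y, s(x, y) ∉ F → M F x y ≤ ε
  abs_netFlow_le : ∀ F x, |netFlow (M F) x| ≤ ε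
  abs_mass_sub_one_le : |∑ F, mass (M F) - 1| ≤ ε
  abs_marginal_le : ∀ a, |ν a - ∑ F, ∑ x, M F x a| ≤ ε
  exists_mem_seqE : ∃ Es ∈ seqE G v₁, ∀ F, F ≠ ∅ → (∀ k, F ≠ Es k) → M F = 0

theorem isClosed_isApproxCirculation (G : SimpleGraph V) [DecidableRel G.Adj] (v₁ : V) :
    IsClosed {z : ℝ × (Finset (Sym2 V) → V → V → ℝ) × (V → ℝ) |
      IsApproxCirculation G v₁ z.1 z.2.1 z.2.2} := by
  have hset : {z : ℝ × (Finset (Sym2 V) → V → V → ℝ) × (V → ℝ) |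
      IsApproxCirculation G v₁ z.1 z.2.1 z.2.2} =
      (⋂ F, ⋂ x, ⋂ y, {z | 0 ≤ z.2.1 F x y}) ∩
      ((⋂ F, ⋂ x, ⋂ y, ⋂ _ : s(x, y) ∉ F, {z | z.2.1 F x y ≤ z.1}) ∩
      ((⋂ F, ⋂ x, {z | |netFlow (z.2.1 F) x| ≤ z.1}) ∩
      ({z | |∑ F, mass (z.2.1 F) - 1| ≤ z.1} ∩
      ((⋂ a, {z | |z.2.2 a - ∑ F, ∑ x, z.2.1 F x a| ≤ z.1}) ∩
      ⋃ Es ∈ seqE G v₁, ⋂ F, ⋂ _ : F ≠ ∅, ⋂ _ : ∀ k, F ≠ Es k, {z | z.2.1 F = 0})))) := by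
    ext z
    simp only [Set.mem_inter_iff, Set.mem_iInter, Set.mem_iUnion, Set.mem_ofPred_eq, exists_prop]
    exact ⟨fun h => ⟨h.1, h.2, h.3, h.4, h.5, h.6⟩, fun ⟨h₁, h₂, h₃, h₄, h₅, h₆⟩ =>
      ⟨h₁, h₂, h₃, h₄, h₅, h₆⟩⟩
  have hnet := fun x => continuous_netFlow (V := V) x
  have hmass := continuous_mass (V := V)
  rw [hset]
  refine .inter ?_ (.inter ?_ (.inter ?_ (.inter ?_ (.inter ?_ ?_))))
  · exact isClosed_iInter fun F => isClosed_iInter fun x => isClosed_iInter fun y =>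
      isClosed_le (by fun_prop) (by fun_prop)
  · exact isClosed_iInter fun F => isClosed_iInter fun x => isClosed_iInter fun y =>
      isClosed_iInter fun _ => isClosed_le (by fun_prop) (by fun_prop)
  · exact isClosed_iInter fun F => isClosed_iInter fun x =>
      isClosed_le (((hnet x).comp (by fun_prop)).abs) (by fun_prop)
  · exact isClosed_le (((continuous_finsetSum _ fun F _ => hmass.comp (by fun_prop)).sub
      continuous_const).abs) (by fun_prop)
  · exact isClosed_iInter fun a => isClosed_le (by fun_prop) (by fun_prop)
  · exact (Set.toFinite _).isClosed_biUnion fun Es _ => isClosed_iInter fun F =>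
      isClosed_iInter fun _ => isClosed_iInter fun _ => isClosed_eq (by fun_prop) (by fun_prop)

theorem IsApproxCirculation.le_one_add (h : IsApproxCirculation G v₁ ε M ν)
    (F : Finset (Sym2 V)) (x y : V) : M F x y ≤ 1 + ε :=
  calc M F x y ≤ mass (M F) := (le_outflow (h.nonneg F) x y).trans (outflow_le_mass (h.nonneg F) x)
    _ ≤ ∑ F, mass (M F) :=
      Finset.single_le_sum (fun F _ => mass_nonneg (h.nonneg F)) (Finset.mem_univ F)
    _ ≤ 1 + ε := by linarith [le_abs_self (∑ F, mass (M F) - 1), h.abs_mass_sub_one_le]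

theorem IsApproxCirculation.isFlow (h : IsApproxCirculation G v₁ 0 M ν) (F : Finset (Sym2 V)) :
    IsFlow F (M F) where
  nonneg := h.nonneg F
  eq_zero_of_notMem x y hxy := (h.le_of_notMem F x y hxy).antisymm (h.nonneg F x y)
  netFlow_eq_zero x := abs_nonpos_iff.1 (h.abs_netFlow_le F x)

theorem injective_of_mem_seqE {Es : Fin G.edgeFinset.card → Finset (Sym2 V)}
    (hEs : Es ∈ seqE G v₁) : Function.Injective Es := fun i j hij =>
  Fin.ext (Nat.succ_injective ((hEs.2.1 i).symm.trans ((congrArg _ hij).trans (hEs.2.1 j))))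

theorem IsApproxCirculation.Ifun_le (hδ : 0 < δ) {ν : ProbMeas V}
    (h : IsApproxCirculation G v₁ 0 M ν.1) : Ifun G v₁ δ ν ≤ (flowCost G δ id M : EReal) := by
  obtain ⟨Es, hEs, hEs₀⟩ := h.exists_mem_seqE
  have hM₀ : ∀ F ∉ Set.range Es, M F = 0 := by
    intro F hF
    rcases eq_or_ne F ∅ with rfl | hne
    · funext x y
      exact (h.isFlow ∅).eq_zero_of_notMem x y (Finset.notMem_empty _)
    · exact hEs₀ F hne fun k hk => hF ⟨k, hk.symm⟩
  have hreindex : ∀ f : Finset (Sym2 V) → (V → V → ℝ) → ℝ, (∀ F, f F 0 = 0) →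
      ∑ k, f (Es k) (M (Es k)) = ∑ F, f F (M F) := fun f hf =>
    Fintype.sum_of_injective Es (injective_of_mem_seqE hEs) _ _
      (fun F hF => by rw [hM₀ F hF, hf]) fun _ => rfl
  have hfamily : (fun k => M (Es k)) ∈ flowFamilies Es := by
    refine ⟨fun k => h.isFlow (Es k), ?_⟩
    rw [hreindex (fun _ => mass) fun _ => by simp [mass, outflow]]
    exact sub_eq_zero.1 (abs_nonpos_iff.1 h.abs_mass_sub_one_le)
  have hmarginal : ∀ x, ∑ k, outflow (M (Es k)) x = ν.1 x := by
    intro x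
    rw [hreindex (fun _ m => outflow m x) fun _ => by simp [outflow],
      sub_eq_zero.1 (abs_nonpos_iff.1 (h.abs_marginal_le x))]
    exact Finset.sum_congr rfl fun F _ => ((h.isFlow F).sum_inflow x).symm
  have hcost : flowCost G δ Es (fun k => M (Es k)) = flowCost G δ id M :=
    hreindex (fun F => flowEntropy (phat G δ F)) fun _ => by simp [flowEntropy]
  exact hcost ▸ Ifun_le_flowCost hδ hEs hfamily hmarginal

theorem IsTrajectory.isApproxCirculation (hG : G.Connected) {l : List V}
    (h : IsTrajectory G v₁ l) :
    IsApproxCirculation G v₁ (l.length : ℝ)⁻¹ (empFlow l) (empFreq l) := by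
  have hlen : 0 < (l.length : ℝ) := by
    cases h <;> simp only [List.length_cons, Nat.cast_succ] <;> positivity
  have hinv : 0 ≤ (l.length : ℝ)⁻¹ := inv_nonneg.2 hlen.le
  refine ⟨fun F x y => by unfold empFlow; positivity, fun F x y hxy => ?_, fun F x => ?_, ?_,
    fun a => ?_, ?_⟩
  · exact mul_le_of_le_one_right hinv (Nat.cast_le_one.2 (h.stepCount_le_one_of_notMem hxy))
  · have hnet : netFlow (empFlow l F) x =
        (l.length : ℝ)⁻¹ * netFlow (fun x y => (stepCount l F x y : ℝ)) x := by
      simp only [netFlow, outflow, empFlow, ← Finset.mul_sum, mul_sub]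
    rw [hnet, abs_mul, abs_of_nonneg hinv]
    exact mul_le_of_le_one_right hinv (h.abs_netFlow_le_one F x)
  · have hcount : (∑ F, ∑ x, ∑ y, (stepCount l F x y : ℝ)) = l.length - 1 := by
      rw [← Nat.cast_pred (Nat.cast_pos.1 hlen), ← sum_stepCount]
      push_cast
      rfl
    simp only [mass, outflow, empFlow, ← Finset.mul_sum, hcount, mul_sub, mul_one,
      inv_mul_cancel₀ hlen.ne', sub_sub_cancel_left, abs_neg, abs_of_nonneg hinv, le_refl]
  · have hdiff : empFreq l a - ∑ F, ∑ x, empFlow l F x a =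
        (l.length : ℝ)⁻¹ * if v₁ = a then 1 else 0 := by
      simp only [empFreq, empFlow, h.count_eq a, ← Finset.mul_sum]
      push_cast
      ring
    rw [hdiff, abs_mul, abs_of_nonneg hinv]
    exact mul_le_of_le_one_right hinv (by split_ifs <;> simp)
  · obtain ⟨Es, hEs, hcount⟩ := h.exists_mem_seqE hG
    refine ⟨Es, hEs, fun F hF hk => funext fun x => funext fun y => ?_⟩
    have hzero : stepCount l F x y = 0 := of_not_not fun hne =>
      let ⟨k, hFk⟩ := hcount F x y hF hne
      hk k hFk
    simp [empFlow, hzero]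

theorem exists_pos_forall_lt_flowCost (hδ : 0 < δ) {C : Set (ProbMeas V)} (hC : IsClosed C)
    {α : ℝ} (hα : ∀ ν ∈ C, (α : EReal) < Ifun G v₁ δ ν) :
    ∃ ε₀ > 0, ∀ ε < ε₀, ∀ M, ∀ ν ∈ C, 0 ≤ ε → IsApproxCirculation G v₁ ε M ν.1 →
      α < flowCost G δ id M := by
  let bad : Set (ℝ × (Finset (Sym2 V) → V → V → ℝ) × ProbMeas V) :=
    {z | z.1 ∈ Set.Icc 0 1 ∧ IsApproxCirculation G v₁ z.1 z.2.1 z.2.2.1 ∧ z.2.2 ∈ C ∧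
      flowCost G δ id z.2.1 ≤ α}
  have hbox : IsCompact ((Set.Icc (0 : ℝ) 1) ×ˢ ((Set.univ.pi fun _ : Finset (Sym2 V) =>
      Set.univ.pi fun _ : V => Set.univ.pi fun _ : V => Set.Icc (0 : ℝ) 2) ×ˢ
      (Set.univ : Set (ProbMeas V)))) :=
    isCompact_Icc.prod ((isCompact_univ_pi fun _ => isCompact_univ_pi fun _ =>
      isCompact_univ_pi fun _ => isCompact_Icc).prod isCompact_univ)
  have hclosed : IsClosed bad := by
    refine .and (isClosed_Icc.preimage continuous_fst) (.and ?_ (.and ?_ ?_))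
    · exact (isClosed_isApproxCirculation G v₁).preimage
        (f := fun z : ℝ × _ × ProbMeas V => (z.1, z.2.1, z.2.2.1)) (by fun_prop)
    · exact hC.preimage (continuous_snd.comp continuous_snd)
    · exact isClosed_le ((continuous_flowCost id).comp (continuous_fst.comp continuous_snd))
        continuous_const
  have hcompact : IsCompact bad := by
    refine hbox.of_isClosed_subset hclosed fun z hz => ⟨hz.1, fun F _ x _ y _ => ?_, trivial⟩
    exact ⟨hz.2.1.nonneg F x y, (hz.2.1.le_one_add F x y).trans (by linarith [hz.1.2])⟩
  have hzero : (0 : ℝ) ∉ Prod.fst '' bad := by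
    rintro ⟨⟨ε, M, ν⟩, ⟨-, hcirc, hν, hcost⟩, rfl⟩
    exact (hα ν hν).not_ge ((hcirc.Ifun_le hδ).trans (EReal.coe_le_coe_iff.2 hcost))
  obtain ⟨ε₀, hε₀, hball⟩ := Metric.isOpen_iff.1
    (hcompact.image continuous_fst).isClosed.isOpen_compl 0 hzero
  refine ⟨min ε₀ 1, lt_min hε₀ one_pos, fun ε hε M ν hν hε' hcirc => not_le.1 fun hcost => ?_⟩
  refine hball (?_ : ε ∈ _) ⟨(ε, M, ν), ⟨⟨hε', (lt_min_iff.1 hε).2.le⟩, hcirc, hν, hcost⟩, rfl⟩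
  rw [Metric.mem_ball, Real.dist_eq, sub_zero, abs_of_nonneg hε']
  exact (lt_min_iff.1 hε).1

end ApproxCirculation

section UpperBound

theorem inv_mul_elog_le {p c s : ℝ} (hs : 0 < s) (h : p ≤ Real.exp (s * c)) :
    ((s⁻¹ : ℝ) : EReal) * elog p ≤ (c : EReal) := by
  unfold elog
  split_ifs with hp
  · rw [EReal.coe_mul_bot_of_pos (inv_pos.2 hs)]
    exact bot_le
  · rw [← EReal.coe_mul, EReal.coe_le_coe_iff, inv_mul_le_iff₀ hs]
    exact (Real.log_le_iff_le_exp (not_le.1 hp)).2 h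

theorem limsup_le_of_le_pow_mul_exp {p : ℕ → ℝ} (d : ℕ) {α : ℝ}
    (h : ∀ᶠ n : ℕ in atTop, p n ≤ ((n : ℝ) + 1) ^ d * Real.exp (-((n + 1) * α))) :
    limsup (fun n : ℕ => ((((n : ℝ) + 1)⁻¹ : ℝ) : EReal) * elog (p n)) atTop ≤ -(α : EReal) := by
  have hbound : ∀ᶠ n : ℕ in atTop, ((((n : ℝ) + 1)⁻¹ : ℝ) : EReal) * elog (p n) ≤
      ((d * (Real.log ((n : ℝ) + 1) / ((n : ℝ) + 1)) - α : ℝ) : EReal) := by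
    filter_upwards [h] with n hn
    have hn₀ : (0 : ℝ) < n + 1 := by positivity
    refine inv_mul_elog_le hn₀ (hn.trans_eq ?_)
    rw [← Real.exp_log (pow_pos hn₀ d), ← Real.exp_add, Real.log_pow]
    congr 1
    field_simp
    ring
  have hlog : Tendsto (fun n : ℕ => Real.log ((n : ℝ) + 1) / ((n : ℝ) + 1)) atTop (𝓝 0) :=
    Real.isLittleO_log_id_atTop.tendsto_div_nhds_zero.comp
      (tendsto_atTop_add_const_right _ _ tendsto_natCast_atTop_atTop)
  have hlim := (continuous_coe_real_ereal.tendsto _).comp ((hlog.const_mul (d : ℝ)).sub_const α)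
  refine (limsup_le_limsup hbound).trans (hlim.limsup_eq.trans ?_).le
  rw [mul_zero, zero_sub, EReal.coe_neg]

variable {V : Type} [Fintype V] [DecidableEq V] {G : SimpleGraph V} [DecidableRel G.Adj]
  {v₁ : V} {δ : ℝ}

theorem limsup_elog_probEmp_le (hG : G.Connected) (hδ : 0 < δ) {C : Set (ProbMeas V)}
    (hC : IsClosed C) :
    limsup (fun n : ℕ => ((((n : ℝ) + 1)⁻¹ : ℝ) : EReal) * elog (probEmp G δ v₁ n C)) atTop ≤
      -sInf (Ifun G v₁ δ '' C) := by
  rw [EReal.le_neg]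
  refine EReal.ge_of_forall_gt_iff_ge.1 fun α hα => EReal.le_neg.1 ?_
  obtain ⟨ε₀, hε₀, hcost⟩ := exists_pos_forall_lt_flowCost hδ hC
    fun ν hν => hα.trans_le (sInf_le ⟨ν, hν, rfl⟩)
  refine limsup_le_of_le_pow_mul_exp
    (Fintype.card V * Fintype.card V * Fintype.card (Finset (Sym2 V))) ?_
  have hsmall : ∀ᶠ n : ℕ in atTop, ((n + 1 : ℕ) : ℝ)⁻¹ < ε₀ :=
    (tendsto_inv_atTop_nhds_zero_nat.comp (tendsto_add_atTop_nat 1)).eventually_lt_const hε₀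
  filter_upwards [hsmall] with n hn
  rw [probEmp_eq_pathProb, ← Nat.cast_succ, ← Nat.cast_pow, ← card_types, Nat.cast_succ]
  refine pathProb_le_card_types_mul_exp hδ fun u hu htraj ⟨ν, hν, hfreq⟩ => ?_
  have hcirc := htraj.isApproxCirculation hG
  rw [← hfreq, List.length_append, List.length_singleton, hu] at hcirc
  exact (hcost _ hn _ ν hν (by positivity) hcirc).le

end UpperBound

/-! ### The Poisson equation of an ergodic flow -/

section Poisson

theorem sum_sum_mul_sub_eq_zero {V : Type*} [Fintype V] {m : V → V → ℝ}
    (hm : ∀ x, netFlow m x = 0) (h : V → ℝ) : ∑ x, ∑ y, m x y * (h x - h y) = 0 := by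
  have hswap : ∑ x, ∑ y, m x y * h y = ∑ x, ∑ y, m x y * h x := by
    rw [Finset.sum_comm]
    refine Finset.sum_congr rfl fun y _ => ?_
    rw [← Finset.sum_mul, ← Finset.sum_mul, ← sub_eq_zero.1 (hm y), outflow]
  simp only [mul_sub, Finset.sum_sub_distrib, hswap, sub_self]

theorem dirichletEnergy_eq {V : Type*} [Fintype V] {m : V → V → ℝ}
    (hm : ∀ x, netFlow m x = 0) (h : V → ℝ) :
    ∑ x, ∑ y, m x y * (h x - h y) ^ 2 = 2 * ∑ x, h x * ∑ y, m x y * (h x - h y) := by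
  rw [← sub_zero (2 * _), ← sum_sum_mul_sub_eq_zero hm fun x => h x ^ 2, Finset.mul_sum,
    ← Finset.sum_sub_distrib]
  refine Finset.sum_congr rfl fun x _ => ?_
  rw [Finset.mul_sum, Finset.mul_sum, ← Finset.sum_sub_distrib]
  exact Finset.sum_congr rfl fun y _ => by ring

/-- The Laplacian of the edge measure `m`. -/
def laplacian {V : Type*} [Fintype V] (m : V → V → ℝ) : (V → ℝ) →ₗ[ℝ] V → ℝ where
  toFun h x := ∑ y, m x y * (h x - h y)
  map_add' h h' := by
    funext x
    simp only [Pi.add_apply, ← Finset.sum_add_distrib]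
    exact Finset.sum_congr rfl fun y _ => by ring
  map_smul' c h := by
    funext x
    simp only [Pi.smul_apply, smul_eq_mul, RingHom.id_apply, Finset.mul_sum]
    exact Finset.sum_congr rfl fun y _ => by ring

/-- Any two vertices of `F` are joined by a path in `F`. -/
def EdgeConnected {V : Type} (F : Finset (Sym2 V)) : Prop :=
  ∀ x y, memVerts F x → memVerts F y → Relation.ReflTransGen (fun a b => s(a, b) ∈ F) x y

/-- A flow charging both directions of every edge of the nonempty connected set `F`: up to
normalization, the two-step marginal of an irreducible stationary chain on the vertices of `F`. -/
structure IsErgodicFlow {V : Type} [Fintype V] (F : Finset (Sym2 V)) (m : V → V → ℝ) : Prop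
    extends IsFlow F m where
  nonempty : F.Nonempty
  connected : EdgeConnected F
  pos_of_mem : ∀ x y, s(x, y) ∈ F → 0 < m x y

variable {V : Type} {F : Finset (Sym2 V)} {m : V → V → ℝ}

theorem EdgeConnected.eq_of_forall_mem {α : Type*} (hF : EdgeConnected F) {h : V → α}
    (hh : ∀ x y, s(x, y) ∈ F → h x = h y) {x y : V} (hx : memVerts F x) (hy : memVerts F y) :
    h x = h y := by
  have hpath := hF x y hx hy
  induction hpath with
  | refl => rfl
  | @tail b c _ hbc ih => exact (ih (memVerts_iff.2 ⟨c, hbc⟩)).trans (hh b c hbc)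

variable [Fintype V]

theorem IsFlow.eq_zero_of_not_memVerts (hm : IsFlow F m) {x : V} (hx : ¬ memVerts F x) (y : V) :
    m x y = 0 :=
  hm.eq_zero_of_notMem x y fun hxy => hx (memVerts_iff.2 ⟨y, hxy⟩)

namespace IsErgodicFlow

theorem outflow_pos (hm : IsErgodicFlow F m) {x : V} (hx : memVerts F x) : 0 < outflow m x :=
  let ⟨y, hy⟩ := memVerts_iff.1 hx
  (hm.pos_of_mem x y hy).trans_le (le_outflow hm.nonneg x y)

theorem mass_pos (hm : IsErgodicFlow F m) : 0 < mass m := by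
  obtain ⟨e, he⟩ := hm.nonempty
  induction e with
  | _ x y =>
    exact (hm.outflow_pos (memVerts_iff.2 ⟨y, he⟩)).trans_le (outflow_le_mass hm.nonneg x)

theorem eq_of_dirichletEnergy_eq_zero (hm : IsErgodicFlow F m) {h : V → ℝ}
    (hh : ∑ x, ∑ y, m x y * (h x - h y) ^ 2 = 0) {x y : V} (hx : memVerts F x)
    (hy : memVerts F y) : h x = h y := by
  refine hm.connected.eq_of_forall_mem (fun a b hab => ?_) hx hy
  have hnonneg : ∀ a b, 0 ≤ m a b * (h a - h b) ^ 2 := fun a b =>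
    mul_nonneg (hm.nonneg a b) (sq_nonneg _)
  have hrow := (Finset.sum_eq_zero_iff_of_nonneg fun a _ =>
    Finset.sum_nonneg fun b _ => hnonneg a b).1 hh a (Finset.mem_univ a)
  have hentry := (Finset.sum_eq_zero_iff_of_nonneg fun b _ => hnonneg a b).1 hrow b
    (Finset.mem_univ b)
  exact sub_eq_zero.1 (pow_eq_zero_iff two_ne_zero |>.1
    ((mul_eq_zero.1 hentry).resolve_left (hm.pos_of_mem a b hab).ne'))

/- By duality: a functional `f` that vanishes on the range of the Laplacian, tested on `f` itself,
has zero Dirichlet energy, so it is constant on the vertices of `F` and annihilates `b`. -/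
theorem mem_range_laplacian (hm : IsErgodicFlow F m) {b : V → ℝ}
    (hb : ∀ x, ¬ memVerts F x → b x = 0) (hb₀ : ∑ x, b x = 0) :
    b ∈ LinearMap.range (laplacian m) := by
  by_contra hmem
  obtain ⟨f, hfb, hf⟩ := Submodule.exists_le_ker_of_notMem hmem
  set φ : V → ℝ := fun x => f (Pi.single x 1) with hφ
  have hf_apply : ∀ v, f v = ∑ x, φ x * v x := fun v => by
    rw [LinearMap.pi_apply_eq_sum_univ f v]
    refine Finset.sum_congr rfl fun x _ => ?_
    rw [smul_eq_mul, mul_comm, hφ]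
    congr 3
    funext y
    simp [Pi.single_apply, eq_comm]
  have henergy : ∑ x, ∑ y, m x y * (φ x - φ y) ^ 2 = 0 := by
    rw [dirichletEnergy_eq hm.netFlow_eq_zero]
    have hzero : f (laplacian m φ) = 0 := hf (LinearMap.mem_range_self _ φ)
    rw [hf_apply] at hzero
    exact (congrArg (2 * ·) hzero).trans (mul_zero 2)
  obtain ⟨e, he⟩ := hm.nonempty
  induction e with
  | _ v w =>
    refine hfb ?_
    calc f b = ∑ x, φ v * b x := by
          rw [hf_apply]
          refine Finset.sum_congr rfl fun x _ => ?_
          by_cases hx : memVerts F x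
          · rw [hm.eq_of_dirichletEnergy_eq_zero henergy hx (memVerts_iff.2 ⟨w, he⟩)]
          · rw [hb x hx, mul_zero, mul_zero]
      _ = 0 := by rw [← Finset.mul_sum, hb₀, mul_zero]

theorem exists_poisson (hm : IsErgodicFlow F m) (g : V → V → ℝ) :
    ∃ h : V → ℝ, ∀ x, ∑ y, m x y *
      (g x y + h y - h x - (∑ x, ∑ y, m x y * g x y) / mass m) = 0 := by
  set c := (∑ x, ∑ y, m x y * g x y) / mass m with hc
  obtain ⟨h, hh⟩ := hm.mem_range_laplacian (b := fun x => ∑ y, m x y * (g x y - c))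
    (fun x hx => by simp only [hm.eq_zero_of_not_memVerts hx, zero_mul, Finset.sum_const_zero])
    (by
      simp only [mul_sub, Finset.sum_sub_distrib, ← Finset.sum_mul]
      rw [hc, sub_eq_zero]
      exact (mul_div_cancel₀ _ hm.mass_pos.ne').symm)
  refine ⟨h, fun x => ?_⟩
  have hx : ∑ y, m x y * (h x - h y) = ∑ y, m x y * (g x y - c) := congrFun hh x
  rw [← sub_eq_zero.2 hx.symm, ← Finset.sum_sub_distrib]
  exact Finset.sum_congr rfl fun y _ => by ring

end IsErgodicFlow

end Poisson

/-! ### Law of large numbers for ergodic flows -/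

section LawOfLargeNumbers

/-- The sum of `g x y` over the steps `x → y` of a history. -/
def stepSum {V : Type*} (g : V → V → ℝ) : List V → ℝ
  | [] => 0
  | [_] => 0
  | y :: x :: t => stepSum g (x :: t) + g x y

theorem stepSum_cons {V : Type*} (g : V → V → ℝ) (y : V) (u : List V) (x : V) (t : List V) :
    stepSum g (y :: (u ++ x :: t)) =
      stepSum g (u ++ x :: t) + g ((u ++ x :: t).headD x) y := by
  cases u <;> rfl

theorem stepSum_add_coboundary {V : Type*} (g : V → V → ℝ) (h : V → ℝ) (c : ℝ) (u : List V) (x : V)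
    (t : List V) :
    stepSum (fun x y => g x y + h y - h x - c) (u ++ x :: t) -
        stepSum (fun x y => g x y + h y - h x - c) (x :: t) =
      stepSum g (u ++ x :: t) - stepSum g (x :: t) - u.length * c +
        (h ((u ++ x :: t).headD x) - h x) := by
  induction u with
  | nil => simp
  | cons y u ih =>
    simp only [List.cons_append, stepSum_cons, List.headD_cons, List.length_cons, Nat.cast_add,
      Nat.cast_one]
    linarith

theorem count_sub_count_eq_stepSum {V : Type*} [DecidableEq V] (a : V) (u : List V) (x : V)
    (t : List V) :
    ((u ++ x :: t).count a : ℝ) - (x :: t).count a =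
      stepSum (fun _ y => if y = a then 1 else 0) (u ++ x :: t) -
        stepSum (fun _ y => if y = a then 1 else 0) (x :: t) := by
  induction u with
  | nil => simp
  | cons y u ih =>
    rw [List.cons_append, stepSum_cons, List.count_cons, add_sub_right_comm, ← ih]
    simp only [beq_iff_eq, Nat.cast_add, Nat.cast_ite, Nat.cast_one, Nat.cast_zero]
    exact add_sub_right_comm _ _ _

theorem eventually_le_mul_natCast {c : ℝ} (hc : 0 < c) (d : ℝ) : ∀ᶠ n : ℕ in atTop, d ≤ c * n :=
  (tendsto_natCast_atTop_atTop.const_mul_atTop hc).eventually_ge_atTop d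

variable {V : Type} [Fintype V] {F : Finset (Sym2 V)} {m : V → V → ℝ}

/-- The Markov chain with kernel `flowKernel F m`, as a kernel on histories. At the empty history it
is set to `0`. -/
def flowChain (F : Finset (Sym2 V)) (m : V → V → ℝ) : List V → V → ℝ
  | [], _ => 0
  | x :: _, y => flowKernel F m x y

theorem flowChain_nonneg (hm : ∀ x y, 0 ≤ m x y) (l : List V) (y : V) : 0 ≤ flowChain F m l y := by
  cases l with
  | nil => exact le_rfl
  | cons x t => exact flowKernel_nonneg hm x y

theorem memVerts_of_flowKernel_ne_zero (hm : IsFlow F m) {x y : V} (h : flowKernel F m x y ≠ 0) :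
    memVerts F y :=
  memVerts_iff.2 ⟨x, Sym2.eq_swap ▸ hm.flowKernel_mem_TE.2.2 x y h⟩

theorem pathExp_flowChain_one (hm : IsFlow F m) (n : ℕ) {x : V} (hx : memVerts F x) (t : List V) :
    pathExp (flowChain F m) n (fun _ => 1) (x :: t) = 1 := by
  induction n generalizing x t with
  | zero => rfl
  | succ n ih =>
    refine Eq.trans (Finset.sum_congr rfl fun y _ => ?_) (sum_flowKernel (m := m) hx)
    rcases eq_or_ne (flowKernel F m x y) 0 with h | h
    · rw [flowChain, h, zero_mul]
    · rw [ih (memVerts_of_flowKernel_ne_zero hm h), mul_one, flowChain]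

theorem sum_flowKernel_mul_eq_zero (hm : IsErgodicFlow F m) {d : V → V → ℝ} {x : V}
    (hx : memVerts F x) (hd : ∑ y, m x y * d x y = 0) : ∑ y, flowKernel F m x y * d x y = 0 := by
  refine (mul_eq_zero.1 ?_).resolve_left (hm.outflow_pos hx).ne'
  simp only [Finset.mul_sum, ← mul_assoc, outflow_mul_flowKernel hm.nonneg]
  exact hd

theorem pathExp_sq_stepSum_sub_le (hm : IsErgodicFlow F m) {d : V → V → ℝ} {B : ℝ}
    (hB : ∀ x y, d x y ^ 2 ≤ B) (hd : ∀ x, ∑ y, m x y * d x y = 0) (s : ℝ) (n : ℕ) {x : V}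
    (hx : memVerts F x) (t : List V) :
    pathExp (flowChain F m) n (fun l => (stepSum d l - s) ^ 2) (x :: t) ≤
      (stepSum d (x :: t) - s) ^ 2 + n * B := by
  induction n generalizing x t with
  | zero => simp [pathExp]
  | succ n ih =>
    set z := stepSum d (x :: t) - s
    calc ∑ y, flowKernel F m x y *
          pathExp (flowChain F m) n (fun l => (stepSum d l - s) ^ 2) (y :: x :: t)
        ≤ ∑ y, flowKernel F m x y * ((z ^ 2 + B + n * B) + 2 * z * d x y) := by
          refine Finset.sum_le_sum fun y _ => ?_
          rcases eq_or_ne (flowKernel F m x y) 0 with h | h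
          · rw [h, zero_mul, zero_mul]
          · refine mul_le_mul_of_nonneg_left ?_ (flowKernel_nonneg hm.nonneg x y)
            have hstep : stepSum d (y :: x :: t) - s = z + d x y := add_sub_right_comm _ _ _
            have hrec := ih (memVerts_of_flowKernel_ne_zero hm.toIsFlow h) (x :: t)
            rw [hstep] at hrec
            linarith [hB x y]
      _ = (∑ y, flowKernel F m x y) * (z ^ 2 + B + n * B) +
          2 * z * ∑ y, flowKernel F m x y * d x y := by
          rw [Finset.sum_mul, Finset.mul_sum, ← Finset.sum_add_distrib]
          exact Finset.sum_congr rfl fun y _ => by ring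
      _ = z ^ 2 + (n + 1 : ℕ) * B := by
          rw [sum_flowKernel_mul_eq_zero hm hx (hd x), sum_flowKernel hx]
          push_cast
          ring

/- Chebyshev's inequality for the martingale that the Poisson equation extracts from
`stepSum g`. -/
theorem eventually_pathProb_stepSum_deviation_le (hm : IsErgodicFlow F m) (g : V → V → ℝ)
    {ε η : ℝ} (hε : 0 < ε) (hη : 0 < η) :
    ∀ᶠ n : ℕ in atTop, ∀ x t, memVerts F x →
      pathProb (flowChain F m) n {l | |stepSum g l - stepSum g (x :: t) -
        n * ((∑ x, ∑ y, m x y * g x y) / mass m)| ≤ ε * n}ᶜ (x :: t) ≤ η := by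
  set c := (∑ x, ∑ y, m x y * g x y) / mass m
  obtain ⟨h, hh⟩ := hm.exists_poisson g
  set d : V → V → ℝ := fun x y => g x y + h y - h x - c
  obtain ⟨B, hB⟩ := (Set.finite_range fun e : V × V => d e.1 e.2 ^ 2).bddAbove
  obtain ⟨C, hC⟩ := (Set.finite_range fun e : V × V => |h e.1 - h e.2|).bddAbove
  simp only [upperBounds, Set.forall_mem_range, Set.mem_ofPred_eq, Prod.forall] at hB hC
  filter_upwards [eventually_le_mul_natCast (half_pos hε) C,
    eventually_le_mul_natCast (mul_pos hη (pow_pos (half_pos hε) 2)) B, eventually_gt_atTop 0]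
    with n hnC hnB hn x t hx
  have hn' : (0 : ℝ) < n := Nat.cast_pos.2 hn
  refine le_of_mul_le_mul_left ?_ (pow_pos (mul_pos (half_pos hε) hn') 2)
  calc (ε / 2 * n) ^ 2 * pathProb (flowChain F m) n _ (x :: t)
      ≤ pathExp (flowChain F m) n (fun l => (stepSum d l - stepSum d (x :: t)) ^ 2) (x :: t) := by
        refine mul_pathProb_le_pathExp (flowChain_nonneg hm.nonneg) (fun l => sq_nonneg _)
          fun u hu hdev => ?_
        rw [← sq_abs (stepSum d _ - _), stepSum_add_coboundary, hu]
        refine pow_le_pow_left₀ (by positivity) ?_ 2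
        have hbound := hC ((u ++ x :: t).headD x) x
        have htri := abs_sub_abs_le_abs_add
          (stepSum g (u ++ x :: t) - stepSum g (x :: t) - n * c) (h ((u ++ x :: t).headD x) - h x)
        rw [Set.mem_compl_iff, Set.mem_ofPred_eq, not_le] at hdev
        linarith
    _ ≤ n * B := by
        have hsecond := pathExp_sq_stepSum_sub_le hm hB hh (stepSum d (x :: t)) n hx t
        rwa [sub_self, zero_pow two_ne_zero, zero_add] at hsecond
    _ ≤ (ε / 2 * n) ^ 2 * η := by nlinarith

theorem eventually_half_le_pathProb_stepSum_near (hm : IsErgodicFlow F m) {ι : Type*} [Finite ι]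
    (g : ι → V → V → ℝ) {ε : ℝ} (hε : 0 < ε) :
    ∀ᶠ n : ℕ in atTop, ∀ x t, memVerts F x →
      1 / 2 ≤ pathProb (flowChain F m) n (⋂ i, {l | |stepSum (g i) l - stepSum (g i) (x :: t) -
        n * ((∑ x, ∑ y, m x y * g i x y) / mass m)| ≤ ε * n}) (x :: t) := by
  have := Fintype.ofFinite ι
  set η : ℝ := 1 / (2 * (Fintype.card ι + 1)) with hη
  have hη_pos : 0 < η := by positivity
  filter_upwards [eventually_all.2 fun i =>
    eventually_pathProb_stepSum_deviation_le hm (g i) hε hη_pos] with n hn x t hx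
  have hunion := pathExp_one_le_pathProb_iInter_add (flowChain_nonneg (F := F) hm.nonneg)
    (fun i => {l | |stepSum (g i) l - stepSum (g i) (x :: t) -
        n * ((∑ x, ∑ y, m x y * g i x y) / mass m)| ≤ ε * n}) n (x :: t)
  rw [pathExp_flowChain_one hm.toIsFlow n hx t] at hunion
  have hsum := Finset.sum_le_sum fun i (_ : i ∈ Finset.univ) => hn i x t hx
  rw [Finset.sum_const, Finset.card_univ, nsmul_eq_mul] at hsum
  have hcard : (Fintype.card ι : ℝ) * η ≤ 1 / 2 := by
    rw [hη, mul_one_div, div_le_div_iff₀ (by positivity) two_pos]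
    linarith
  linarith

end LawOfLargeNumbers

/-! ### Change of measure -/

section ChangeOfMeasure

theorem exists_eq_cons_of_pathEdges_nonempty {V : Type} [DecidableEq V] {l : List V}
    (hl : (pathEdges l).Nonempty) : ∃ x t, l = x :: t ∧ memVerts (pathEdges l) x := by
  match l, hl with
  | [], h | [_], h => exact absurd h Finset.not_nonempty_empty
  | x :: y :: t, _ =>
    exact ⟨x, y :: t, rfl, memVerts_iff.2 ⟨y, Finset.mem_insert_self _ _⟩⟩

theorem pathEdges_cons_of_mem {V : Type} [DecidableEq V] {x y : V} {t : List V}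
    (h : s(x, y) ∈ pathEdges (x :: t)) : pathEdges (y :: x :: t) = pathEdges (x :: t) :=
  Finset.insert_eq_self.2 (Sym2.eq_swap ▸ h)

variable {V : Type} [Fintype V] [DecidableEq V] {G : SimpleGraph V} [DecidableRel G.Adj] {δ : ℝ}
  {F : Finset (Sym2 V)} {m : V → V → ℝ}

/-- The logarithmic density of a step of the chain with kernel `flowKernel F m` with respect to the
walk that has traversed `F`. -/
def stepCost (G : SimpleGraph V) [DecidableRel G.Adj] (δ : ℝ) (F : Finset (Sym2 V))
    (m : V → V → ℝ) (x y : V) : ℝ :=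
  Real.log (flowKernel F m x y / phat G δ F x y)

theorem sum_mul_stepCost (hδ : 0 < δ) (hm : IsFlow F m) (hF : F ⊆ G.edgeFinset) :
    ∑ x, ∑ y, m x y * stepCost G δ F m x y = flowEntropy (phat G δ F) m := by
  refine Finset.sum_congr rfl fun x _ => Finset.sum_congr rfl fun y _ => ?_
  rcases eq_or_ne (m x y) 0 with hxy | hxy
  · rw [hxy, zero_mul, zero_mul]
  have hmem : s(x, y) ∈ F := of_not_not fun h => hxy (hm.eq_zero_of_notMem x y h)
  have hout : outflow m x ≠ 0 := fun h => hxy (eq_zero_of_outflow_eq_zero hm.nonneg h y)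
  rw [stepCost, flowKernel, if_neg hout,
    Real.log_div (div_ne_zero hxy hout) (phat_pos hδ F (adj_of_mem hF hmem)).ne',
    Real.log_div hxy hout]

theorem flowKernel_eq_phat_mul_exp (hδ : 0 < δ) (hm : IsFlow F m) (hF : F ⊆ G.edgeFinset) {x y : V}
    (hxy : flowKernel F m x y ≠ 0) :
    flowKernel F m x y = phat G δ F x y * Real.exp (stepCost G δ F m x y) := by
  have hp := phat_pos hδ F (adj_of_mem hF (hm.flowKernel_mem_TE.2.2 x y hxy))
  have hq := (flowKernel_nonneg hm.nonneg x y).lt_of_ne' hxy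
  rw [stepCost, Real.exp_log (div_pos hq hp), mul_div_cancel₀ _ hp.ne']

theorem pathWeight_flowChain (hδ : 0 < δ) (hm : IsFlow F m) (hF : F ⊆ G.edgeFinset) {x : V}
    {t : List V} (hxt : pathEdges (x :: t) = F) (u : List V)
    (hu : pathWeight (flowChain F m) (x :: t) u ≠ 0) :
    pathEdges (u ++ x :: t) = F ∧ pathWeight (flowChain F m) (x :: t) u =
      pathWeight (stepKernel (phat G δ)) (x :: t) u *
        Real.exp (stepSum (stepCost G δ F m) (u ++ x :: t) -
          stepSum (stepCost G δ F m) (x :: t)) := by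
  induction u with
  | nil => simp [pathWeight, hxt]
  | cons y u ih =>
    simp only [pathWeight] at hu ⊢
    obtain ⟨hedges, hweight⟩ := ih (right_ne_zero_of_mul hu)
    obtain ⟨z, s, hzs⟩ := List.exists_cons_of_ne_nil
      (List.append_ne_nil_of_right_ne_nil u (List.cons_ne_nil x t))
    have hstep := left_ne_zero_of_mul hu
    simp only [List.cons_append, hzs, flowChain, stepKernel] at hstep hedges hweight ⊢
    refine ⟨(pathEdges_cons_of_mem ?_).trans hedges, ?_⟩
    · exact hedges ▸ hm.flowKernel_mem_TE.2.2 z y hstep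
    · rw [hweight, hedges, flowKernel_eq_phat_mul_exp hδ hm hF hstep, stepSum, add_sub_right_comm,
        Real.exp_add]
      ring

theorem exp_neg_mul_pathProb_flowChain_le (hδ : 0 < δ) (hm : IsFlow F m) (hF : F ⊆ G.edgeFinset)
    {x : V} {t : List V} (hxt : pathEdges (x :: t) = F) {S : Set (List V)} {D : ℝ}
    (hS : ∀ l ∈ S, stepSum (stepCost G δ F m) l - stepSum (stepCost G δ F m) (x :: t) ≤ D) (n : ℕ) :
    Real.exp (-D) * pathProb (flowChain F m) n S (x :: t) ≤
      pathProb (stepKernel (phat G δ)) n (S ∩ {l | pathEdges l = F}) (x :: t) := by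
  rw [pathProb, pathProb, pathExp_eq_sum, pathExp_eq_sum, Finset.mul_sum]
  refine Finset.sum_le_sum fun w _ => ?_
  set u := (List.ofFn w).reverse
  have hnonneg : 0 ≤ pathWeight (stepKernel (phat G δ)) (x :: t) u :=
    pathWeight_nonneg (stepKernel_nonneg (phat_nonneg hδ)) _ _
  have hright : 0 ≤ pathWeight (stepKernel (phat G δ)) (x :: t) u *
      (S ∩ {l | pathEdges l = F}).indicator 1 (u ++ x :: t) :=
    mul_nonneg hnonneg (Set.indicator_nonneg (fun _ _ => zero_le_one) _)
  by_cases hu : pathWeight (flowChain F m) (x :: t) u = 0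
  · rwa [hu, zero_mul, mul_zero]
  by_cases huS : u ++ x :: t ∈ S
  · obtain ⟨hedges, hweight⟩ := pathWeight_flowChain hδ hm hF hxt u hu
    have hmem : u ++ x :: t ∈ S ∩ {l | pathEdges l = F} := ⟨huS, hedges⟩
    rw [Set.indicator_of_mem huS, Set.indicator_of_mem hmem, hweight, Pi.one_apply, mul_one,
      mul_one, mul_left_comm, ← Real.exp_add]
    exact mul_le_of_le_one_right hnonneg (Real.exp_le_one_iff.2 (by linarith [hS _ huS]))
  · rwa [Set.indicator_of_notMem huS, mul_zero, mul_zero]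

end ChangeOfMeasure

/-! ### Following a flow within one edge set -/

section Tracking

theorem abs_mul_div_mass_sub_le {V : Type} [Fintype V] {F : Finset (Sym2 V)}
    {m : V → V → ℝ} (hm : IsErgodicFlow F m) (a : V) (s t : ℝ) :
    |s * (outflow m a / mass m) - t * outflow m a| ≤ |s - t * mass m| := by
  have hdiff : s * (outflow m a / mass m) - t * outflow m a =
      (s - t * mass m) * (outflow m a / mass m) := by
    have := hm.mass_pos
    field_simp
  have hfrac : |outflow m a / mass m| ≤ 1 := by
    rw [abs_of_nonneg (div_nonneg (outflow_nonneg hm.nonneg a) hm.mass_pos.le),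
      div_le_one hm.mass_pos]
    exact outflow_le_mass hm.nonneg a
  rw [hdiff, abs_mul]
  exact mul_le_of_le_one_right (abs_nonneg _) hfrac

variable {V : Type} [DecidableEq V]

/-- The histories that have, for each vertex `a`, visited `a` about `c a` times more often than
`l`, up to an error of `r`. -/
def visitsNear (l : List V) (c : V → ℝ) (r : ℝ) : Set (List V) :=
  {l' | ∀ a, |(l'.count a : ℝ) - l.count a - c a| ≤ r}

theorem visitsNear_subset (l : List V) {c c' : V → ℝ} {r r' : ℝ}
    (h : ∀ a, |c a - c' a| + r ≤ r') : visitsNear l c r ⊆ visitsNear l c' r' := fun l' hl' a =>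
  calc |(l'.count a : ℝ) - l.count a - c' a|
      = |((l'.count a : ℝ) - l.count a - c a) + (c a - c' a)| := by congr 1; ring
    _ ≤ |(l'.count a : ℝ) - l.count a - c a| + |c a - c' a| := abs_add_le _ _
    _ ≤ r' := by linarith [hl' a, h a]

variable [Fintype V] {G : SimpleGraph V} [DecidableRel G.Adj] {δ : ℝ} {F : Finset (Sym2 V)}
  {m : V → V → ℝ}

theorem sum_mul_indicator_eq_outflow (hm : IsFlow F m) (a : V) :
    ∑ x, ∑ y, m x y * (if y = a then 1 else 0) = outflow m a := by
  rw [← hm.sum_inflow]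
  simp

theorem eventually_half_mul_exp_le_pathProb (hδ : 0 < δ) (hm : IsErgodicFlow F m)
    (hF : F ⊆ G.edgeFinset) {ε : ℝ} (hε : 0 < ε) :
    ∀ᶠ n : ℕ in atTop, ∀ l, pathEdges l = F →
      Real.exp (-(n * (flowEntropy (phat G δ F) m / mass m + ε))) * (1 / 2) ≤
        pathProb (stepKernel (phat G δ)) n (visitsNear l (fun a => n * (outflow m a / mass m))
          (ε * n) ∩ {l' | pathEdges l' = F}) l := by
  let g : Option V → V → V → ℝ := fun i =>
    i.elim (stepCost G δ F m) fun a _ y => if y = a then 1 else 0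
  filter_upwards [eventually_half_le_pathProb_stepSum_near hm g hε] with n hn l hl
  obtain ⟨x, t, rfl, hx⟩ := exists_eq_cons_of_pathEdges_nonempty (hl ▸ hm.nonempty)
  have hhalf := hn x t (hl ▸ hx)
  set S := ⋂ i, {l | |stepSum (g i) l - stepSum (g i) (x :: t) -
    n * ((∑ x, ∑ y, m x y * g i x y) / mass m)| ≤ ε * n}
  have hcost : ∀ l ∈ S, stepSum (stepCost G δ F m) l - stepSum (stepCost G δ F m) (x :: t) ≤
      n * (flowEntropy (phat G δ F) m / mass m + ε) := fun l hl => by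
    have hnone := Set.mem_iInter.1 hl none
    simp only [g, Option.elim_none, sum_mul_stepCost hδ hm.toIsFlow hF, Set.mem_ofPred_eq] at hnone
    linarith [le_abs_self (stepSum (stepCost G δ F m) l - stepSum (stepCost G δ F m) (x :: t) -
      n * (flowEntropy (phat G δ F) m / mass m))]
  refine (mul_le_mul_of_nonneg_left hhalf (Real.exp_pos _).le).trans
    ((exp_neg_mul_pathProb_flowChain_le hδ hm.toIsFlow hF hl hcost n).trans
      (pathProb_mono (stepKernel_nonneg (phat_nonneg hδ)) fun u _ hu => ⟨fun a => ?_, hu.2⟩))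
  have hsome := Set.mem_iInter.1 hu.1 (some a)
  simp only [g, Option.elim_some, sum_mul_indicator_eq_outflow hm.toIsFlow, Set.mem_ofPred_eq]
    at hsome
  rwa [count_sub_count_eq_stepSum]

/- The time horizon `H` need only match `n * mass m` up to a bounded error, which absorbs the
steps spent between phases. -/
theorem eventually_exp_le_pathProb (hδ : 0 < δ) (hm : IsErgodicFlow F m) (hF : F ⊆ G.edgeFinset)
    {ε : ℝ} (hε : 0 < ε) (K : ℝ) :
    ∀ᶠ n : ℕ in atTop, ∀ l, pathEdges l = F → ∀ H : ℕ, |(H : ℝ) - n * mass m| ≤ K →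
      Real.exp (-(n * (flowEntropy (phat G δ F) m + ε))) ≤
        pathProb (stepKernel (phat G δ)) H (visitsNear l (fun a => n * outflow m a) (ε * n) ∩
          {l' | pathEdges l' = F}) l := by
  set R := mass m
  have hR_pos : 0 < R := hm.mass_pos
  set Φ := flowEntropy (phat G δ F) m
  set ε' := ε / (2 * (R + 1)) with hε'
  have hε'_pos : 0 < ε' := by positivity
  have hε'R : ε' * R ≤ ε / 2 := by
    rw [hε', div_mul_eq_mul_div, div_le_div_iff₀ (by positivity) two_pos]
    nlinarith
  obtain ⟨n₀, hn₀⟩ := eventually_atTop.1 (eventually_half_mul_exp_le_pathProb hδ hm hF hε'_pos)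
  filter_upwards [eventually_le_mul_natCast hR_pos (n₀ + K),
    eventually_le_mul_natCast (half_pos hε) (ε' * K + K),
    eventually_le_mul_natCast (half_pos hε) (Real.log 2 + K * |Φ / R| + ε' * K)]
    with n hlarge hvisits hcost l hl H hH
  have hHn := abs_le.1 hH
  have hε'H : ε' * H ≤ ε / 2 * n + ε' * K := by nlinarith
  have hn₀H : n₀ ≤ H := (Nat.cast_le (α := ℝ)).1 (by linarith)
  refine le_trans ?_ ((hn₀ H hn₀H l hl).trans
    (pathProb_mono (stepKernel_nonneg (phat_nonneg hδ)) fun u _ hu =>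
      ⟨visitsNear_subset l (fun a => ?_) hu.1, hu.2⟩))
  · have hhalf : (1 / 2 : ℝ) = Real.exp (-Real.log 2) := by
      rw [Real.exp_neg, Real.exp_log two_pos, one_div]
    rw [hhalf, ← Real.exp_add, Real.exp_le_exp]
    have hscale : (n : ℝ) * Φ = n * R * (Φ / R) := by field_simp
    have hdrift : ((H : ℝ) - n * R) * (Φ / R) ≤ K * |Φ / R| :=
      (le_abs_self _).trans ((abs_mul _ _).trans_le (mul_le_mul_of_nonneg_right hH (abs_nonneg _)))
    nlinarith
  · linarith [(abs_mul_div_mass_sub_le hm a H n).trans hH]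

end Tracking

/-! ### Passing from one edge set to the next -/

section Connections

theorem mul_pathProb_le_pathProb_add {A : Type*} [Fintype A] {K : List A → A → ℝ}
    (hK : ∀ l y, 0 ≤ K l y) {c : ℝ} {m n : ℕ} {S T : Set (List A)} {l : List A}
    (h : ∀ u : List A, u.length = m → u ++ l ∈ T → c ≤ pathProb K n S (u ++ l)) :
    c * pathProb K m T l ≤ pathProb K (m + n) S l :=
  (mul_pathProb_le_pathExp hK (pathProb_nonneg hK n S) h).trans_eq
    (pathExp_add_steps K m n _ l).symm

theorem pathWeight_mul_pathProb_le {A : Type*} [Fintype A] {K : List A → A → ℝ}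
    (hK : ∀ l y, 0 ≤ K l y) (l u : List A) (n : ℕ) (S : Set (List A)) :
    pathWeight K l u * pathProb K n S (u ++ l) ≤ pathProb K (u.length + n) S l := by
  induction u generalizing n with
  | nil => rw [pathWeight, one_mul, List.nil_append, List.length_nil, zero_add]
  | cons y u ih =>
    have hstep : K (u ++ l) y * pathProb K n S (y :: (u ++ l)) ≤ pathProb K (n + 1) S (u ++ l) :=
      Finset.single_le_sum (f := fun z => K (u ++ l) z * pathProb K n S (z :: (u ++ l)))
        (fun z _ => mul_nonneg (hK _ z) (pathProb_nonneg hK n S _)) (Finset.mem_univ y)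
    calc pathWeight K l (y :: u) * pathProb K n S (y :: u ++ l)
        = pathWeight K l u * (K (u ++ l) y * pathProb K n S (y :: (u ++ l))) := by
          rw [pathWeight, List.cons_append]
          ring
      _ ≤ pathWeight K l u * pathProb K (n + 1) S (u ++ l) :=
          mul_le_mul_of_nonneg_left hstep (pathWeight_nonneg hK l u)
      _ ≤ pathProb K (u.length + (n + 1)) S l := ih (n + 1)
      _ = pathProb K ((y :: u).length + n) S l := by
          rw [List.length_cons, add_right_comm, add_assoc]

section EdgeConnected

variable {V : Type} {F : Finset (Sym2 V)}

theorem edgeConnected_of_forall_reflTransGen {a : V}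
    (h : ∀ x, memVerts F x → Relation.ReflTransGen (fun b c => s(b, c) ∈ F) a x) :
    EdgeConnected F := fun x y hx hy =>
  have : Std.Symm fun b c => s(b, c) ∈ F := ⟨fun _ _ hbc => Sym2.eq_swap ▸ hbc⟩
  (symm (h x hx)).trans (h y hy)

theorem edgeConnected_singleton (a b : V) : EdgeConnected {s(a, b)} := by
  refine edgeConnected_of_forall_reflTransGen (a := a) fun x ⟨e, he, hx⟩ => ?_
  rw [Finset.mem_singleton.1 he] at hx
  rcases Sym2.mem_iff.1 hx with rfl | rfl
  exacts [.refl, .single (Finset.mem_singleton_self _)]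

theorem EdgeConnected.insert_edge [DecidableEq V] (hF : EdgeConnected F) {a : V}
    (ha : memVerts F a) (b : V) : EdgeConnected (insert s(a, b) F) := by
  refine edgeConnected_of_forall_reflTransGen (a := a) fun x ⟨e, he, hx⟩ => ?_
  rcases Finset.mem_insert.1 he with rfl | he
  · rcases Sym2.mem_iff.1 hx with rfl | rfl
    exacts [.refl, .single (Finset.mem_insert_self _ _)]
  · exact Relation.ReflTransGen.mono (fun _ _ => Finset.mem_insert_of_mem) a x
      (hF a x ha ⟨e, he, hx⟩)

end EdgeConnected

/-- From every history in `S`, the walk can within a bounded number of steps reach a history in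
`T`, with a probability bounded below. -/
def Connects {A : Type*} (K : List A → A → ℝ) (S T : Set (List A)) : Prop :=
  ∃ D : ℕ, ∃ c > 0, ∀ l ∈ S, ∃ u : List A, u.length ≤ D ∧ u ++ l ∈ T ∧ c ≤ pathWeight K l u

variable {V : Type} [Fintype V] [DecidableEq V] {G : SimpleGraph V} [DecidableRel G.Adj] {δ : ℝ}
  {F : Finset (Sym2 V)}

theorem exists_le_pathWeight_of_reflTransGen (hδ : 0 < δ) (hF : F ⊆ G.edgeFinset) {x z : V}
    (h : Relation.ReflTransGen (fun a b => s(a, b) ∈ F) x z) :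
    ∃ n : ℕ, ∃ c > 0, ∀ t, pathEdges (x :: t) = F → ∃ u s, u.length = n ∧ u ++ x :: t = z :: s ∧
      pathEdges (z :: s) = F ∧ c ≤ pathWeight (stepKernel (phat G δ)) (x :: t) u := by
  induction h with
  | refl => exact ⟨0, 1, one_pos, fun t ht => ⟨[], t, rfl, rfl, ht, le_rfl⟩⟩
  | @tail a b _ hab ih =>
    obtain ⟨n, c, hc, hpath⟩ := ih
    have hp := phat_pos hδ F (adj_of_mem hF hab)
    refine ⟨n + 1, phat G δ F a b * c, mul_pos hp hc, fun t ht => ?_⟩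
    obtain ⟨u, s, hu, hus, hs, hcu⟩ := hpath t ht
    refine ⟨b :: u, a :: s, by rw [List.length_cons, hu], by rw [List.cons_append, hus], ?_, ?_⟩
    · exact (pathEdges_cons_of_mem (hs ▸ hab)).trans hs
    · rw [pathWeight, hus, stepKernel, hs]
      exact mul_le_mul_of_nonneg_left hcu hp.le

theorem EdgeConnected.connects_insert (hconn : EdgeConnected F) (hδ : 0 < δ)
    (hF : F ⊆ G.edgeFinset) {a b : V} (ha : memVerts F a) (hab : G.Adj a b) :
    Connects (stepKernel (phat G δ)) {l | pathEdges l = F}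
      {l | pathEdges l = insert s(a, b) F} := by
  have hpath : ∀ x : {x // memVerts F x}, _ := fun x =>
    exists_le_pathWeight_of_reflTransGen hδ hF (hconn x a x.2 ha)
  choose n c hc hpath using hpath
  have : Nonempty {x // memVerts F x} := ⟨a, ha⟩
  obtain ⟨x₀, hx₀⟩ := Finite.exists_min c
  have hp := phat_pos hδ F hab
  refine ⟨Finset.univ.sup n + 1, phat G δ F a b * c x₀, mul_pos hp (hc x₀),
    fun l (hl : _ = _) => ?_⟩
  have hne : (pathEdges l).Nonempty := let ⟨e, he, _⟩ := ha; ⟨e, hl ▸ he⟩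
  obtain ⟨x, t, rfl, hx⟩ := exists_eq_cons_of_pathEdges_nonempty hne
  obtain ⟨u, s, hu, hus, hs, hcu⟩ := hpath ⟨x, hl ▸ hx⟩ t hl
  refine ⟨b :: u, ?_, ?_, ?_⟩
  · rw [List.length_cons, hu]
    exact Nat.succ_le_succ (Finset.le_sup (Finset.mem_univ _))
  · rw [Set.mem_ofPred_eq, List.cons_append, hus, pathEdges, hs, Sym2.eq_swap]
  · rw [pathWeight, hus, stepKernel, hs]
    exact mul_le_mul_of_nonneg_left ((hx₀ _).trans hcu) hp.le

variable {v₁ : V} {Es : Fin G.edgeFinset.card → Finset (Sym2 V)}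

theorem exists_eq_insert_of_mem_seqE (hEs : Es ∈ seqE G v₁) {k l : Fin G.edgeFinset.card}
    (hkl : (k : ℕ) + 1 = l) :
    ∃ a b, memVerts (Es k) a ∧ G.Adj a b ∧ Es l = insert s(a, b) (Es k) := by
  obtain ⟨hsub, hcard, hlt, -, hadj⟩ := hEs
  obtain ⟨e, he, hinsert⟩ := Finset.exists_eq_insert_iff.2
    ⟨(hlt k l hkl).subset, by rw [hcard, hcard, hkl]⟩
  have hel : e ∈ Es l := hinsert ▸ Finset.mem_insert_self e _
  obtain ⟨e', he', a, ⟨b, rfl⟩, ha⟩ := hadj k l hkl e (Finset.mem_sdiff.2 ⟨hel, he⟩)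
  exact ⟨a, b, ⟨e', he', ha⟩, adj_of_mem (hsub l) hel, hinsert.symm⟩

theorem exists_eq_singleton_of_mem_seqE (hEs : Es ∈ seqE G v₁) (hb : 0 < G.edgeFinset.card) :
    ∃ w, G.Adj v₁ w ∧ Es ⟨0, hb⟩ = {s(v₁, w)} := by
  obtain ⟨hsub, hcard, -, hstart, -⟩ := hEs
  obtain ⟨e, he⟩ := Finset.card_eq_one.1 (hcard ⟨0, hb⟩)
  obtain ⟨e', he', w, rfl⟩ := hstart ⟨0, hb⟩ rfl
  refine ⟨w, adj_of_mem (hsub _) he', ?_⟩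
  rw [he, Finset.mem_singleton] at he'
  rw [he, he']

theorem connects_start_of_mem_seqE (hδ : 0 < δ) (hEs : Es ∈ seqE G v₁)
    (hb : 0 < G.edgeFinset.card) :
    Connects (stepKernel (phat G δ)) {[v₁]} {t | pathEdges t = Es ⟨0, hb⟩} := by
  obtain ⟨w, hadj, hw⟩ := exists_eq_singleton_of_mem_seqE hEs hb
  refine ⟨1, phat G δ ∅ v₁ w, phat_pos hδ ∅ hadj, fun l (hl : _ = _) => ⟨[w], le_rfl, ?_, ?_⟩⟩
  · rw [hl, hw, Set.mem_ofPred_eq, Sym2.eq_swap]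
    rfl
  · rw [hl, pathWeight, pathWeight, mul_one]
    rfl

theorem edgeConnected_of_mem_seqE (hEs : Es ∈ seqE G v₁) (k : Fin G.edgeFinset.card) :
    EdgeConnected (Es k) := by
  obtain ⟨k, hk⟩ := k
  induction k with
  | zero =>
    obtain ⟨w, -, hw⟩ := exists_eq_singleton_of_mem_seqE hEs hk
    exact hw ▸ edgeConnected_singleton v₁ w
  | succ k ih =>
    obtain ⟨a, b, ha, -, hins⟩ :=
      exists_eq_insert_of_mem_seqE hEs (k := ⟨k, by omega⟩) (l := ⟨k + 1, hk⟩) rfl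
    exact hins ▸ (ih _).insert_edge ha b

theorem connects_of_mem_seqE (hδ : 0 < δ) (hEs : Es ∈ seqE G v₁) {k l : Fin G.edgeFinset.card}
    (hkl : (k : ℕ) + 1 = l) :
    Connects (stepKernel (phat G δ)) {t | pathEdges t = Es k} {t | pathEdges t = Es l} := by
  obtain ⟨a, b, ha, hab, hins⟩ := exists_eq_insert_of_mem_seqE hEs hkl
  exact hins ▸ (edgeConnected_of_mem_seqE hEs k).connects_insert hδ (hEs.1 k) ha hab

end Connections

/-! ### Following a family of flows through successive edge sets -/

section Phases

theorem visitsNear_append_subset {V : Type} [DecidableEq V] (u l : List V) (c : V → ℝ) (r : ℝ) :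
    visitsNear (u ++ l) c r ⊆ visitsNear l c (r + u.length) := fun l' hl' a => by
  have hu : (u.count a : ℝ) ≤ u.length := by exact_mod_cast List.count_le_length
  have hcount := abs_le.1 (hl' a)
  rw [List.count_append, Nat.cast_add] at hcount
  rw [abs_le]
  constructor <;> linarith [Nat.cast_nonneg (α := ℝ) (u.count a)]

theorem mem_visitsNear_trans {V : Type} [DecidableEq V] {l₁ l₂ l₃ : List V} {c c' : V → ℝ}
    {r r' : ℝ} (h₁₂ : l₂ ∈ visitsNear l₁ c r) (h₂₃ : l₃ ∈ visitsNear l₂ c' r') :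
    l₃ ∈ visitsNear l₁ (c + c') (r + r') := fun a =>
  calc |(l₃.count a : ℝ) - l₁.count a - (c + c') a|
      = |((l₂.count a : ℝ) - l₁.count a - c a) + ((l₃.count a : ℝ) - l₂.count a - c' a)| := by
        rw [Pi.add_apply]
        congr 1
        ring
    _ ≤ r + r' := (abs_add_le _ _).trans (add_le_add (h₁₂ a) (h₂₃ a))

/-- From every history in `S`, within about `n * R` steps, the walk visits each vertex `a` about
`n * ρ a` times, at an exponential cost of at most `Φ` per unit of `n`. The horizon `H` may differ
from `n * R` by a bounded amount `B`. -/
def CanTrack {V : Type} [Fintype V] [DecidableEq V] (K : List V → V → ℝ) (S : Set (List V)) (R : ℝ)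
    (ρ : V → ℝ) (Φ : ℝ) : Prop :=
  ∀ ε > 0, ∀ B : ℝ, ∀ᶠ n : ℕ in atTop, ∀ l ∈ S, ∀ H : ℕ, |(H : ℝ) - n * R| ≤ B →
    Real.exp (-(n * (Φ + ε))) ≤ pathProb K H (visitsNear l (fun a => n * ρ a) (ε * n)) l

variable {V : Type} [Fintype V] [DecidableEq V]

theorem CanTrack.of_connects {K : List V → V → ℝ} (hK : ∀ l y, 0 ≤ K l y) {S T : Set (List V)}
    {R Φ : ℝ} {ρ : V → ℝ} (hT : CanTrack K T R ρ Φ) (hR : 0 < R) (hST : Connects K S T) :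
    CanTrack K S R ρ Φ := by
  intro ε hε B
  obtain ⟨D, c, hc, hST⟩ := hST
  filter_upwards [hT (ε / 2) (half_pos hε) (B + D), eventually_le_mul_natCast hR (B + D),
    eventually_le_mul_natCast (half_pos hε) D,
    eventually_le_mul_natCast (half_pos hε) (-Real.log c)]
    with n hn hhorizon hvisits hcost l hl H hH
  obtain ⟨u, huD, huT, hcu⟩ := hST l hl
  have hu : (u.length : ℝ) ≤ D := Nat.cast_le.2 huD
  have hHn := abs_le.1 hH
  have huH : u.length ≤ H := (Nat.cast_le (α := ℝ)).1 (by linarith)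
  obtain ⟨H, rfl⟩ := Nat.exists_eq_add_of_le huH
  push_cast at hHn
  have htrack := hn (u ++ l) huT H
    (abs_le.2 (by constructor <;> linarith [Nat.cast_nonneg (α := ℝ) u.length]))
  calc Real.exp (-(n * (Φ + ε)))
      ≤ c * Real.exp (-(n * (Φ + ε / 2))) := by
        rw [← Real.exp_log hc, ← Real.exp_add, Real.exp_le_exp]
        linarith
    _ ≤ pathWeight K l u * pathProb K H (visitsNear (u ++ l) (fun a => n * ρ a) (ε / 2 * n))
          (u ++ l) :=
        mul_le_mul hcu htrack (Real.exp_pos _).le (pathWeight_nonneg hK l u)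
    _ ≤ pathProb K (u.length + H) (visitsNear (u ++ l) (fun a => n * ρ a) (ε / 2 * n)) l :=
        pathWeight_mul_pathProb_le hK l u H _
    _ ≤ pathProb K (u.length + H) (visitsNear l (fun a => n * ρ a) (ε * n)) l :=
        pathProb_mono hK fun _ _ h => visitsNear_subset l
          (fun a => by rw [sub_self, abs_zero]; linarith) (visitsNear_append_subset u l _ _ h)

variable {G : SimpleGraph V} [DecidableRel G.Adj] {δ : ℝ} {F : Finset (Sym2 V)} {m : V → V → ℝ}

theorem IsErgodicFlow.canTrack (hm : IsErgodicFlow F m) (hδ : 0 < δ) (hF : F ⊆ G.edgeFinset) :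
    CanTrack (stepKernel (phat G δ)) {l | pathEdges l = F} (mass m) (outflow m)
      (flowEntropy (phat G δ F) m) := by
  intro ε hε B
  filter_upwards [eventually_exp_le_pathProb hδ hm hF hε B] with n hn l hl H hH
  exact (hn l hl H hH).trans
    (pathProb_mono (stepKernel_nonneg (phat_nonneg hδ)) fun _ _ h => h.1)

theorem IsErgodicFlow.canTrack_add (hm : IsErgodicFlow F m) (hδ : 0 < δ) (hF : F ⊆ G.edgeFinset)
    {R Φ : ℝ} {ρ : V → ℝ} (hR : 0 < R)
    (hT : CanTrack (stepKernel (phat G δ)) {l | pathEdges l = F} R ρ Φ) :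
    CanTrack (stepKernel (phat G δ)) {l | pathEdges l = F} (mass m + R) (outflow m + ρ)
      (flowEntropy (phat G δ F) m + Φ) := by
  intro ε hε B
  filter_upwards [eventually_exp_le_pathProb hδ hm hF (half_pos hε) 1,
    hT (ε / 2) (half_pos hε) (B + 1), eventually_le_mul_natCast hR B]
    with n hfirst hsecond hhorizon l hl H hH
  have hfloor := Nat.floor_le (mul_nonneg n.cast_nonneg hm.mass_pos.le)
  have hfloor' := Nat.lt_floor_add_one ((n : ℝ) * mass m)
  set H₁ := ⌊(n : ℝ) * mass m⌋₊
  have hHn := abs_le.1 hH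
  have hH₁ : H₁ ≤ H := (Nat.cast_le (α := ℝ)).1 (by linarith)
  obtain ⟨H₂, rfl⟩ := Nat.exists_eq_add_of_le hH₁
  push_cast at hHn
  calc Real.exp (-(n * (flowEntropy (phat G δ F) m + Φ + ε)))
      = Real.exp (-(n * (Φ + ε / 2))) *
          Real.exp (-(n * (flowEntropy (phat G δ F) m + ε / 2))) := by
        rw [← Real.exp_add]
        congr 1
        ring
    _ ≤ _ := mul_le_mul_of_nonneg_left
        (hfirst l hl H₁ (abs_le.2 (by constructor <;> linarith))) (Real.exp_pos _).le
    _ ≤ _ := mul_pathProb_le_pathProb_add (stepKernel_nonneg (phat_nonneg hδ)) fun u _ hu =>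
        (hsecond (u ++ l) hu.2 H₂ (abs_le.2 (by constructor <;> linarith))).trans
          (pathProb_mono (stepKernel_nonneg (phat_nonneg hδ)) fun _ _ h =>
            visitsNear_subset l (fun a => ?_) (mem_visitsNear_trans hu.1 h))
  simp only [Pi.add_apply, mul_add, sub_self, abs_zero]
  linarith

theorem canTrack_sum (hδ : 0 < δ) {b : ℕ} (hb : 0 < b) {Es : Fin b → Finset (Sym2 V)}
    {M : Fin b → V → V → ℝ} (hM : ∀ k, IsErgodicFlow (Es k) (M k))
    (hEs : ∀ k, Es k ⊆ G.edgeFinset)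
    (hconn : ∀ k l : Fin b, (k : ℕ) + 1 = l → Connects (stepKernel (phat G δ))
      {t | pathEdges t = Es k} {t | pathEdges t = Es l}) :
    CanTrack (stepKernel (phat G δ)) {t | pathEdges t = Es ⟨0, hb⟩} (∑ k, mass (M k))
      (∑ k, outflow (M k)) (flowCost G δ Es M) := by
  obtain ⟨b, rfl⟩ := Nat.exists_eq_add_one.2 hb
  induction b with
  | zero => simpa [flowCost] using (hM 0).canTrack hδ (hEs 0)
  | succ b ih =>
    have htail := ih b.succ_pos (fun k => hM k.succ) (fun k => hEs k.succ)
      fun k l hkl => hconn k.succ l.succ (by simpa using hkl)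
    have hmass : 0 < ∑ k : Fin (b + 1), mass (M k.succ) :=
      Finset.sum_pos (fun k _ => (hM k.succ).mass_pos) Finset.univ_nonempty
    simp only [flowCost, Fin.sum_univ_succ (n := b + 1)]
    exact (hM 0).canTrack_add hδ (hEs 0) hmass
      (htail.of_connects (stepKernel_nonneg (phat_nonneg hδ)) hmass (hconn 0 _ rfl))

end Phases

/-! ### Perturbing a family of flows to a positive one -/

section Positive

section IsFlow

variable {V : Type*} [Fintype V] {F : Finset (Sym2 V)} {m m' : V → V → ℝ}

theorem outflow_add (m m' : V → V → ℝ) (x : V) : outflow (m + m') x = outflow m x + outflow m' x :=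
  Finset.sum_add_distrib

theorem outflow_smul (c : ℝ) (m : V → V → ℝ) (x : V) : outflow (c • m) x = c * outflow m x :=
  (Finset.mul_sum _ _ _).symm

theorem mass_add (m m' : V → V → ℝ) : mass (m + m') = mass m + mass m' := by
  simp only [mass, outflow_add, Finset.sum_add_distrib]

theorem mass_smul (c : ℝ) (m : V → V → ℝ) : mass (c • m) = c * mass m := by
  simp only [mass, outflow_smul, Finset.mul_sum]

theorem IsFlow.add (hm : IsFlow F m) (hm' : IsFlow F m') : IsFlow F (m + m') where
  nonneg x y := add_nonneg (hm.nonneg x y) (hm'.nonneg x y)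
  eq_zero_of_notMem x y h := by
    rw [Pi.add_apply, Pi.add_apply, hm.eq_zero_of_notMem x y h, hm'.eq_zero_of_notMem x y h,
      add_zero]
  netFlow_eq_zero x := by
    simp only [netFlow, outflow_add, Pi.add_apply, Finset.sum_add_distrib, hm.sum_inflow,
      hm'.sum_inflow, sub_self]

theorem IsFlow.smul (hm : IsFlow F m) {c : ℝ} (hc : 0 ≤ c) : IsFlow F (c • m) where
  nonneg x y := mul_nonneg hc (hm.nonneg x y)
  eq_zero_of_notMem x y h := by
    rw [Pi.smul_apply, Pi.smul_apply, hm.eq_zero_of_notMem x y h, smul_zero]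
  netFlow_eq_zero x := by
    simp only [netFlow, outflow_smul, Pi.smul_apply, smul_eq_mul, ← Finset.mul_sum, hm.sum_inflow,
      sub_self]

end IsFlow

theorem convex_flowFamilies {V ι : Type*} [Fintype V] [Fintype ι] (Es : ι → Finset (Sym2 V)) :
    Convex ℝ (flowFamilies Es) := by
  rintro M ⟨hM, hM₁⟩ M' ⟨hM', hM'₁⟩ a b ha hb hab
  refine ⟨fun k => ((hM k).smul ha).add ((hM' k).smul hb), ?_⟩
  simp only [Pi.add_apply, Pi.smul_apply, mass_add, mass_smul, Finset.sum_add_distrib,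
    ← Finset.mul_sum, hM₁, hM'₁, mul_one, hab]

theorem exists_probMeas_of_mem_flowFamilies {V : Type} {ι : Type*} [Fintype V] [Fintype ι]
    {Es : ι → Finset (Sym2 V)} {M : ι → V → V → ℝ} (hM : M ∈ flowFamilies Es) :
    ∃ ν : ProbMeas V, ∀ x, ∑ k, outflow (M k) x = ν.1 x :=
  ⟨⟨fun x => ∑ k, outflow (M k) x,
    fun x => Finset.sum_nonneg fun k _ => outflow_nonneg (hM.1 k).nonneg x,
    Finset.sum_comm.trans hM.2⟩, fun _ => rfl⟩

/-- The families in `flowFamilies Es` that charge both directions of every edge of every `Es k`. -/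
def posFlowFamilies {V ι : Type*} [Fintype V] [Fintype ι] (Es : ι → Finset (Sym2 V)) :
    Set (ι → V → V → ℝ) :=
  {M | M ∈ flowFamilies Es ∧ ∀ k x y, s(x, y) ∈ Es k → 0 < M k x y}

variable {V : Type} {ι : Type*} [Fintype V] [Fintype ι] [Nonempty ι] {Es : ι → Finset (Sym2 V)}

theorem posFlowFamilies_nonempty (hEs : ∀ k, (Es k).Nonempty) : (posFlowFamilies Es).Nonempty := by
  have hmass := fun k => mass_edgeIndicator_pos (hEs k)
  have hcoef : ∀ k, 0 < (Fintype.card ι * mass (edgeIndicator (Es k)))⁻¹ := fun k =>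
    inv_pos.2 (mul_pos (Nat.cast_pos.2 Fintype.card_pos) (hmass k))
  refine ⟨fun k => (Fintype.card ι * mass (edgeIndicator (Es k)))⁻¹ • edgeIndicator (Es k),
    ⟨fun k => (isFlow_edgeIndicator (Es k)).smul (hcoef k).le, ?_⟩, fun k x y h => ?_⟩
  · simp only [mass_smul, mul_inv, inv_mul_cancel_right₀ (hmass _).ne', Finset.sum_const,
      Finset.card_univ, nsmul_eq_mul]
    exact mul_inv_cancel₀ (Nat.cast_ne_zero.2 Fintype.card_ne_zero)
  · simp only [Pi.smul_apply, edgeIndicator_of_mem h, smul_eq_mul, mul_one]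
    exact hcoef k

theorem flowFamilies_subset_closure_posFlowFamilies (hEs : ∀ k, (Es k).Nonempty) :
    flowFamilies Es ⊆ closure (posFlowFamilies Es) := fun M hM => by
  obtain ⟨U, hU, hU_pos⟩ := posFlowFamilies_nonempty hEs
  have hsegment : openSegment ℝ M U ⊆ posFlowFamilies Es := by
    rintro _ ⟨a, b, ha, hb, hab, rfl⟩
    exact ⟨convex_flowFamilies Es hM hU ha.le hb.le hab, fun k x y h =>
      add_pos_of_nonneg_of_pos (mul_nonneg ha.le ((hM.1 k).nonneg x y))
        (mul_pos hb (hU_pos k x y h))⟩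
  refine closure_mono hsegment ?_
  rw [closure_openSegment]
  exact left_mem_segment ℝ M U

end Positive

/-! ### The lower bound -/

section LowerBound

theorem le_inv_mul_elog {p c s : ℝ} (hs : 0 < s) (h : Real.exp (s * c) ≤ p) :
    (c : EReal) ≤ ((s⁻¹ : ℝ) : EReal) * elog p := by
  have hp : 0 < p := (Real.exp_pos _).trans_le h
  rw [elog, if_neg hp.not_ge, ← EReal.coe_mul, EReal.coe_le_coe_iff, le_inv_mul_iff₀ hs]
  exact (Real.le_log_iff_exp_le hp).2 h

theorem card_edgeFinset_pos {V : Type*} [Nontrivial V] {G : SimpleGraph V} [Fintype G.edgeSet]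
    (hG : G.Connected) : 0 < G.edgeFinset.card := by
  obtain ⟨v⟩ := hG.nonempty
  obtain ⟨w, hw⟩ := hG.preconnected.exists_adj_of_nontrivial v
  exact Finset.card_pos.2 ⟨s(v, w), SimpleGraph.mem_edgeFinset.2 hw⟩

theorem abs_empFreq_sub_le {V : Type} [DecidableEq V] {v : V} {l : List V} {ρ : V → ℝ} {ε : ℝ}
    (hl : l ∈ visitsNear [v] (fun a => l.length * ρ a) (ε * l.length))
    (hlen : 0 < l.length) (hε : 1 ≤ ε * l.length) (a : V) : |empFreq l a - ρ a| ≤ 2 * ε := by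
  have hlen' : (0 : ℝ) < l.length := Nat.cast_pos.2 hlen
  have hdiff : empFreq l a - ρ a = ((l.count a : ℝ) - l.length * ρ a) / l.length := by
    rw [empFreq]
    field_simp
  have hone : ([v].count a : ℝ) ≤ 1 := by exact_mod_cast List.count_le_length (l := [v])
  have hcount := abs_le.1 (hl a)
  rw [hdiff, abs_div, abs_of_pos hlen', div_le_iff₀ hlen', abs_le]
  constructor <;> linarith [Nat.cast_nonneg (α := ℝ) ([v].count a)]

variable {V : Type} [Fintype V] [DecidableEq V]

theorem exists_probMeas_eq_empFreq {l : List V} (hl : l ≠ []) :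
    ∃ ν : ProbMeas V, ν.1 = empFreq l := by
  refine ⟨⟨empFreq l, fun a => by unfold empFreq; positivity, ?_⟩, rfl⟩
  have hsum : ∑ a, l.count a = l.length :=
    (Finset.sum_subset (Finset.subset_univ _) fun a _ ha =>
      List.count_eq_zero.2 (mt List.mem_toFinset.2 ha)).symm.trans l.sum_toFinset_count_eq_length
  simp only [empFreq]
  rw [← Finset.sum_div, ← Nat.cast_sum, hsum,
    div_self (Nat.cast_ne_zero.2 (List.length_pos_of_ne_nil hl).ne')]

variable {G : SimpleGraph V} [DecidableRel G.Adj] {v₁ : V} {δ : ℝ}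

theorem CanTrack.eventually_exp_le_probEmp (hδ : 0 < δ) {ρ : V → ℝ} {Φ : ℝ}
    (h : CanTrack (stepKernel (phat G δ)) {[v₁]} 1 ρ Φ) {U : Set (V → ℝ)} (hU : U ∈ 𝓝 ρ) {β : ℝ}
    (hβ : Φ < β) :
    ∀ᶠ n : ℕ in atTop,
      Real.exp (((n : ℝ) + 1) * -β) ≤ probEmp G δ v₁ n (Subtype.val ⁻¹' U) := by
  obtain ⟨r, hr, hball⟩ := Metric.nhds_basis_closedBall.mem_iff.1 hU
  set ε := min (β - Φ) (r / 2)
  have hε : 0 < ε := lt_min (sub_pos.2 hβ) (half_pos hr)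
  filter_upwards [(tendsto_add_atTop_nat 1).eventually (h ε hε 1),
    (tendsto_add_atTop_nat 1).eventually (eventually_le_mul_natCast hε 1)] with n htrack hn
  have hhorizon : |(n : ℝ) - (n + 1 : ℕ) * 1| ≤ 1 := by simp
  have hcost : ((n : ℝ) + 1) * -β ≤ -((n + 1 : ℕ) * (Φ + ε)) := by
    have : ε ≤ β - Φ := min_le_left _ _
    push_cast
    nlinarith
  rw [probEmp_eq_pathProb]
  refine (Real.exp_le_exp.2 hcost).trans ((htrack [v₁] rfl n hhorizon).trans
    (pathProb_mono (stepKernel_nonneg (phat_nonneg hδ)) fun u hu hvisits => ?_))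
  have hlen : (u ++ [v₁]).length = n + 1 := by rw [List.length_append, hu, List.length_singleton]
  rw [← hlen] at hvisits hn
  obtain ⟨ν, hν⟩ := exists_probMeas_eq_empFreq (List.append_ne_nil_of_right_ne_nil u
    (List.cons_ne_nil v₁ []))
  refine ⟨ν, hball ((dist_pi_le_iff hr.le).2 fun a => ?_), hν⟩
  rw [hν, Real.dist_eq]
  exact (abs_empFreq_sub_le hvisits (hlen ▸ n.succ_pos) hn a).trans
    (by linarith [min_le_right (β - Φ) (r / 2)])

theorem canTrack_of_mem_posFlowFamilies (hδ : 0 < δ) (hb : 0 < G.edgeFinset.card)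
    {Es : Fin G.edgeFinset.card → Finset (Sym2 V)} (hEs : Es ∈ seqE G v₁)
    {M : Fin G.edgeFinset.card → V → V → ℝ} (hM : M ∈ posFlowFamilies Es) :
    CanTrack (stepKernel (phat G δ)) {[v₁]} 1 (∑ k, outflow (M k)) (flowCost G δ Es M) := by
  have hergodic : ∀ k, IsErgodicFlow (Es k) (M k) := fun k =>
    { hM.1.1 k with
      nonempty := nonempty_of_mem_seqE hEs k
      connected := edgeConnected_of_mem_seqE hEs k
      pos_of_mem := hM.2 k }
  have htrack := canTrack_sum hδ hb hergodic hEs.1 fun k l => connects_of_mem_seqE hδ hEs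
  rw [hM.1.2] at htrack
  exact htrack.of_connects (stepKernel_nonneg (phat_nonneg hδ)) one_pos
    (connects_start_of_mem_seqE hδ hEs hb)

theorem le_liminf_elog_probEmp [Nontrivial V] (hG : G.Connected) (hδ : 0 < δ)
    {O : Set (ProbMeas V)} (hO : IsOpen O) :
    -sInf (Ifun G v₁ δ '' O) ≤
      liminf (fun n : ℕ => ((((n : ℝ) + 1)⁻¹ : ℝ) : EReal) * elog (probEmp G δ v₁ n O)) atTop := by
  rw [EReal.neg_le]
  refine EReal.le_of_forall_lt_iff_le.1 fun β hβ => EReal.neg_le.1 ?_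
  obtain ⟨_, ⟨ν, hν, rfl⟩, hlt⟩ := sInf_lt_iff.1 hβ
  obtain ⟨Es, hEs, M, hM, hmarg, hcost⟩ := exists_flow_of_Ifun_lt hδ hlt
  obtain ⟨U, hU, rfl⟩ := isOpen_induced_iff.1 hO
  have hb := card_edgeFinset_pos hG
  have : Nonempty (Fin G.edgeFinset.card) := ⟨⟨0, hb⟩⟩
  have hcont : Continuous fun M : Fin G.edgeFinset.card → V → V → ℝ => ∑ k, outflow (M k) := by
    unfold outflow
    fun_prop
  have hmarg' : ∑ k, outflow (M k) = ν.1 := by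
    funext x
    rw [Finset.sum_apply, hmarg]
  obtain ⟨M', ⟨hM'U, hM'β⟩, hM'⟩ := mem_closure_iff.1
    (flowFamilies_subset_closure_posFlowFamilies (nonempty_of_mem_seqE hEs) hM)
    ({M | ∑ k, outflow (M k) ∈ U} ∩ {M | flowCost G δ Es M < β})
    ((hU.preimage hcont).inter (isOpen_lt (continuous_flowCost Es) continuous_const))
    ⟨(congrArg (· ∈ U) hmarg').mpr hν, EReal.coe_lt_coe_iff.1 hcost⟩
  refine le_liminf_of_le (by isBoundedDefault) ?_
  filter_upwards [(canTrack_of_mem_posFlowFamilies hδ hb hEs hM').eventually_exp_le_probEmp hδ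
    (hU.mem_nhds hM'U) hM'β] with n hn
  rw [← EReal.coe_neg]
  exact le_inv_mul_elog (by positivity) hn

end LowerBound

theorem exists_Ifun_lt_top {V : Type} [Fintype V] [DecidableEq V] [Nontrivial V]
    {G : SimpleGraph V} [DecidableRel G.Adj] (hG : G.Connected) (v₁ : V) {δ : ℝ} (hδ : 0 < δ) :
    ∃ ν : ProbMeas V, Ifun G v₁ δ ν < ⊤ := by
  obtain ⟨Es, hEs⟩ := seqE_nonempty (v₁ := v₁) hG
  have : Nonempty (Fin G.edgeFinset.card) := ⟨⟨0, card_edgeFinset_pos hG⟩⟩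
  obtain ⟨M, hM, -⟩ := posFlowFamilies_nonempty (nonempty_of_mem_seqE hEs)
  obtain ⟨ν, hν⟩ := exists_probMeas_of_mem_flowFamilies hM
  exact ⟨ν, (Ifun_le_flowCost hδ hEs hM hν).trans_lt (EReal.coe_lt_top _)⟩

/-- The empirical measure process of the `δ`-ORRW satisfies a large
deviation principle on `𝒫(V)` with good rate function `I_δ`. -/
theorem orrw_ldp {V : Type} [Fintype V] [DecidableEq V]
    (G : SimpleGraph V) [DecidableRel G.Adj] (hG : G.Connected)
    (hV : 3 ≤ Fintype.card V) (v₁ : V) (δ : ℝ) (hδ : 0 < δ) :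
    LowerSemicontinuous (Ifun G v₁ δ) ∧
    (∀ M : ℝ, 0 < M → IsCompact {ν : ProbMeas V | Ifun G v₁ δ ν ≤ (M : EReal)}) ∧
    (∃ ν : ProbMeas V, Ifun G v₁ δ ν < ⊤) ∧
    (∀ C : Set (ProbMeas V), IsClosed C →
      Filter.limsup
          (fun n : ℕ => ((((n : ℝ) + 1)⁻¹ : ℝ) : EReal) * elog (probEmp G δ v₁ n C)) atTop
        ≤ -sInf (Ifun G v₁ δ '' C)) ∧
    (∀ O : Set (ProbMeas V), IsOpen O →
      -sInf (Ifun G v₁ δ '' O) ≤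
        Filter.liminf
          (fun n : ℕ => ((((n : ℝ) + 1)⁻¹ : ℝ) : EReal) * elog (probEmp G δ v₁ n O)) atTop) := by
  have : Nontrivial V := Fintype.one_lt_card_iff_nontrivial.1 (by lia)
  exact ⟨lowerSemicontinuous_Ifun hδ, fun M _ => isCompact_Ifun_le hδ _,
    exists_Ifun_lt_top hG v₁ hδ, fun C hC => limsup_elog_probEmp_le hG hδ hC,
    fun O hO => le_liminf_elog_probEmp hG hδ hO⟩

end ORRW
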